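/- arXiv:1504.00233 — 8 statements merged into one kernel-verified Lean document; each statement's English description precedes it below -/
import Mathlib

section
/- Reverse Hölder inequality for the matrix trace: let M be an n×n positive semidefinite complex matrix, N an n×n positive definite complex matrix, p ∈ (0,1) a real number, and q = p/(p−1) (so q < 0 and 1/p + 1/q = 1). Then Re tr(M·N) ≥ (Re tr(M^p))^(1/p) · (Re tr(N^q))^(1/q). -/
/-!
Diagonalize `M = ∑ i, a i • |u i⟩⟨u i|` and `N = ∑ j, b j • |v j⟩⟨v j|`. The overlaps
`w i j = |⟨u i, v j⟩|²` form a doubly stochastic matrix, because the change of basis is unitary, so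
`tr (M N) = ∑ w i j * (a i * b j)`, `tr (M ^ p) = ∑ w i j * a i ^ p` and
`tr (N ^ q) = ∑ w i j * b j ^ q`. This reduces the claim to the reverse Hölder inequality for
weighted sums over pairs `(i, j)`. Since `q * (1 - p) = -p`, that one is the usual Hölder inequality
with exponents `1 / p` and `1 / (1 - p)`, applied to the factorization
`w * a ^ p = (w * (a * b)) ^ p * (w * b ^ q) ^ (1 - p)`.
-/

open Matrix
open scoped ComplexOrder

/-- Real power of a Hermitian matrix via the spectral decomposition (junk value `0`
if the matrix is not Hermitian). Eigenvalue `0` is sent to `0` whenever `c ≠ 0`. -/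
noncomputable def mpow {d : Type*} [Fintype d] [DecidableEq d]
    (M : Matrix d d ℂ) (c : ℝ) : Matrix d d ℂ :=
  if hM : M.IsHermitian then hM.cfc (fun t => t ^ c) else 0

/-- Hölder's inequality with a weight, for exponents `p ∈ (0,1)` and `q = p / (p - 1) < 0`. -/
lemma sum_weight_rpow_le {ι : Type*} (s : Finset ι) (w a b : ι → ℝ) (p q : ℝ)
    (hp0 : 0 < p) (hp1 : p < 1) (hq : q = p / (p - 1))
    (hw : ∀ k, 0 ≤ w k) (ha : ∀ k, 0 ≤ a k) (hb : ∀ k, 0 < b k) :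
    ∑ k ∈ s, w k * a k ^ p ≤
      (∑ k ∈ s, w k * (a k * b k)) ^ p * (∑ k ∈ s, w k * b k ^ q) ^ (1 - p) := by
  have hp1' : 0 < 1 - p := by linarith
  have hqp : q * (1 - p) = -p := by
    rw [hq]
    have : p - 1 ≠ 0 := by linarith
    field_simp
    ring
  have hwab : ∀ k, 0 ≤ w k * (a k * b k) := fun k =>
    mul_nonneg (hw k) (mul_nonneg (ha k) (hb k).le)
  have hwb : ∀ k, 0 ≤ w k * b k ^ q := fun k => mul_nonneg (hw k) (Real.rpow_nonneg (hb k).le q)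
  have H := Real.inner_le_Lp_mul_Lq_of_nonneg s
    (f := fun k => (w k * (a k * b k)) ^ p) (g := fun k => (w k * b k ^ q) ^ (1 - p))
    (Real.HolderConjugate.inv_one_sub_inv hp0 hp1)
    (fun k _ => Real.rpow_nonneg (hwab k) _) (fun k _ => Real.rpow_nonneg (hwb k) _)
  simp only [Real.rpow_rpow_inv (hwab _) hp0.ne', Real.rpow_rpow_inv (hwb _) hp1'.ne',
    one_div, inv_inv] at H
  refine le_of_eq_of_le (Finset.sum_congr rfl fun k _ => ?_) H
  rw [Real.mul_rpow (hw k) (mul_nonneg (ha k) (hb k).le), Real.mul_rpow (ha k) (hb k).le,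
    Real.mul_rpow (hw k) (Real.rpow_nonneg (hb k).le q), ← Real.rpow_mul (hb k).le, hqp]
  have h1 : w k ^ p * w k ^ (1 - p) = w k := by
    rw [← Real.rpow_add' (hw k) (by norm_num)]
    simp
  have h2 : b k ^ p * b k ^ (-p) = 1 := by
    rw [← Real.rpow_add (hb k)]
    simp
  calc w k * a k ^ p = (w k ^ p * w k ^ (1 - p)) * a k ^ p * (b k ^ p * b k ^ (-p)) := by
        rw [h1, h2, mul_one]
    _ = _ := by ring

lemma trace_mpow_re {n : ℕ} {M : Matrix (Fin n) (Fin n) ℂ} (hM : M.IsHermitian) (c : ℝ) :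
    ((mpow M c).trace).re = ∑ i, hM.eigenvalues i ^ c := by
  rw [mpow, dif_pos hM, Matrix.IsHermitian.cfc, Unitary.conjStarAlgAut_apply, Matrix.trace_mul_comm,
    ← mul_assoc, Unitary.coe_star_mul_self, one_mul, Matrix.trace_diagonal]
  simp

/-- The weights are `w i j = |⟨u i, v j⟩|²`, for eigenvector bases `u` of `M` and `v` of `N`. -/
lemma exists_doublyStochastic_trace_mul {n : ℕ} {M N : Matrix (Fin n) (Fin n) ℂ}
    (hM : M.IsHermitian) (hN : N.IsHermitian) :
    ∃ w : Fin n → Fin n → ℝ, (∀ i j, 0 ≤ w i j) ∧ (∀ i, ∑ j, w i j = 1) ∧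
      (∀ j, ∑ i, w i j = 1) ∧
      ((M * N).trace).re = ∑ i, ∑ j, w i j * (hM.eigenvalues i * hN.eigenvalues j) := by
  set X : unitary (Matrix (Fin n) (Fin n) ℂ) :=
    star hM.eigenvectorUnitary * hN.eigenvectorUnitary with hX
  have hnorm (z : ℂ) : z * star z = (Complex.normSq z : ℂ) := Complex.mul_conj z
  refine ⟨fun i j => Complex.normSq ((X : Matrix (Fin n) (Fin n) ℂ) i j),
    fun i j => Complex.normSq_nonneg _, fun i => ?_, fun j => ?_, ?_⟩
  · have h := congrFun (congrFun (Unitary.coe_mul_star_self X) i) i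
    simp only [Matrix.mul_apply, Unitary.coe_star, Matrix.star_apply, Matrix.one_apply_eq, hnorm] at h
    exact_mod_cast h
  · have h := congrFun (congrFun (Unitary.coe_star_mul_self X) j) j
    simp only [Matrix.mul_apply, Matrix.star_apply, Matrix.one_apply_eq,
      mul_comm (star _), hnorm] at h
    exact_mod_cast h
  · have key : (M * N).trace = ((diagonal (RCLike.ofReal ∘ hM.eigenvalues) : Matrix _ _ ℂ) *
        ((X : Matrix (Fin n) (Fin n) ℂ) * diagonal (RCLike.ofReal ∘ hN.eigenvalues) *
          star (X : Matrix (Fin n) (Fin n) ℂ))).trace := by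
      conv_lhs => rw [hM.spectral_theorem, hN.spectral_theorem]
      simp only [Unitary.conjStarAlgAut_apply, hX, Submonoid.coe_mul, Unitary.coe_star, star_mul,
        star_star, mul_assoc]
      rw [Matrix.trace_mul_comm]
      simp only [mul_assoc]
    rw [key, Matrix.trace]
    simp only [Matrix.diag_apply, Matrix.diagonal_mul]
    rw [Complex.re_sum]
    refine Finset.sum_congr rfl fun i _ => ?_
    rw [Matrix.mul_apply, Finset.mul_sum, Complex.re_sum]
    refine Finset.sum_congr rfl fun j _ => ?_
    rw [Matrix.mul_diagonal, Matrix.star_apply, mul_right_comm _ _ (star _), hnorm]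
    simp only [Function.comp_apply, Complex.coe_algebraMap,
      ← Complex.ofReal_mul, Complex.ofReal_re]
    ring

/-- **Reverse Hölder inequality for the matrix trace.**
If `M` is positive semidefinite, `N` is positive definite, `p ∈ (0,1)` and `q = p/(p-1)`,
then `Re tr (M N) ≥ (Re tr (M^p))^(1/p) · (Re tr (N^q))^(1/q)`. -/
theorem reverse_hoelder_trace {n : ℕ} (M N : Matrix (Fin n) (Fin n) ℂ)
    (hM : M.PosSemidef) (hN : N.PosDef) (p q : ℝ) (hp0 : 0 < p) (hp1 : p < 1)
    (hq : q = p / (p - 1)) :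
    ((M * N).trace).re ≥
      ((mpow M p).trace).re ^ (1 / p) * ((mpow N q).trace).re ^ (1 / q) := by
  have hp1' : p - 1 ≠ 0 := by linarith
  have hq0 : q ≠ 0 := by
    rw [hq]
    exact div_ne_zero hp0.ne' hp1'
  rw [trace_mpow_re hM.1, trace_mpow_re hN.1]
  obtain ⟨w, hw, hrow, hcol, htr⟩ := exists_doublyStochastic_trace_mul hM.1 hN.1
  have ha := hM.eigenvalues_nonneg
  have hb := hN.eigenvalues_pos
  rw [htr]
  set a := hM.1.eigenvalues
  set b := hN.1.eigenvalues
  have hA : ∑ i, a i ^ p = ∑ i, ∑ j, w i j * a i ^ p := by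
    simp_rw [← Finset.sum_mul, hrow, one_mul]
  have hB : ∑ j, b j ^ q = ∑ i, ∑ j, w i j * b j ^ q := by
    rw [Finset.sum_comm]
    simp_rw [← Finset.sum_mul, hcol, one_mul]
  have H := sum_weight_rpow_le Finset.univ (fun k : Fin n × Fin n => w k.1 k.2)
    (fun k => a k.1) (fun k => b k.2) p q hp0 hp1 hq
    (fun k => hw _ _) (fun k => ha _) (fun k => hb _)
  simp only [Fintype.sum_prod_type] at H
  rw [← hA, ← hB] at H
  have hT : 0 ≤ ∑ i, ∑ j, w i j * (a i * b j) := Finset.sum_nonneg fun i _ =>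
    Finset.sum_nonneg fun j _ => mul_nonneg (hw i j) (mul_nonneg (ha i) (hb j).le)
  have hS : 0 ≤ ∑ i, a i ^ p := Finset.sum_nonneg fun i _ => Real.rpow_nonneg (ha i) p
  set T := ∑ i, ∑ j, w i j * (a i * b j)
  set S := ∑ i, a i ^ p
  have hR0 : 0 ≤ ∑ j, b j ^ q := Finset.sum_nonneg fun j _ => Real.rpow_nonneg (hb j).le q
  set R := ∑ j, b j ^ q
  -- `R = 0` happens only in dimension zero; then the junk value `0 ^ (1 / q) = 0` is harmless.
  rcases hR0.eq_or_lt with hR | hR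
  · rw [← hR, Real.zero_rpow (one_div_ne_zero hq0), mul_zero]
    exact hT
  have hexp : (1 - p) * (1 / p) + 1 / q = 0 := by
    rw [hq]
    field_simp
    ring
  calc S ^ (1 / p) * R ^ (1 / q)
      ≤ (T ^ p * R ^ (1 - p)) ^ (1 / p) * R ^ (1 / q) := by
        gcongr
    _ = T * (R ^ ((1 - p) * (1 / p)) * R ^ (1 / q)) := by
        rw [Real.mul_rpow (Real.rpow_nonneg hT _) (Real.rpow_nonneg hR.le _), one_div,
          Real.rpow_rpow_inv hT hp0.ne', ← Real.rpow_mul hR.le, mul_assoc]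
    _ = T := by
        rw [← Real.rpow_add hR, hexp, Real.rpow_zero, mul_one]
end

section
/- Variational characterization of the Schatten p-(quasi)norm of a positive semidefinite matrix: let M be a nonzero n×n positive semidefinite complex matrix and set r = 1 − 1/p. (i) If p > 1, then for every density matrix N one has Re tr(M·N^r) ≤ (Re tr(M^p))^(1/p), with equality for N = M^p / tr(M^p); hence (Re tr(M^p))^(1/p) is the maximum of Re tr(M·N^r) over all density matrices N. (ii) If 0 < p < 1 and M is positive definite, then for every positive definite density matrix N one has Re tr(M·N^r) ≥ (Re tr(M^p))^(1/p), with equality for N = M^p / tr(M^p); hence (Re tr(M^p))^(1/p) is the minimum of Re tr(M·N^r) over all positive definite density matrices N. -/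
/-!
Diagonalise `M` and `N` with eigenvalues `μ i` and `ν j`. The squared moduli `w i j` of the overlaps
of the two eigenbases form a doubly stochastic matrix, and `tr (M N^r) = ∑ i j, μ i * ν j ^ r * w i j`
(`trace_mpow_mul_mpow`). With `T = tr (M^p)`, weighted AM-GM gives for `p > 1` the pointwise bound
`μ i * ν j ^ r ≤ T ^ (1/p) * (p⁻¹ * (μ i ^ p / T) + r * ν j)` (`young_scaled`). For `p < 1` the
exponent `r` is negative and Bernoulli's inequality reverses it (`young_scaled_reverse`). Weighted by
`w`, the right-hand side sums to `T ^ (1/p) * (1/p + r) = T ^ (1/p)` because `tr N = 1`.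

For `N = M^p / T`, everything is a function of `M`, so the trace is
`∑ i, μ i * (μ i ^ p / T) ^ r = T ^ (-r) * ∑ i, μ i ^ p = T ^ (1/p)`.
-/

open Matrix
open scoped ComplexOrder

/-- Every function is continuous on the finite spectrum of a matrix. -/
lemma continuousOn_spectrum {d : Type*} [Fintype d] [DecidableEq d]
    (M : Matrix d d ℂ) (f : ℝ → ℝ) : ContinuousOn f (spectrum ℝ M) :=
  Matrix.finite_real_spectrum.continuousOn f

lemma mpow_eq_cfc {d : Type*} [Fintype d] [DecidableEq d]
    {M : Matrix d d ℂ} (hM : M.IsHermitian) (c : ℝ) : mpow M c = cfc (fun t : ℝ => t ^ c) M := by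
  rw [mpow, dif_pos hM, hM.cfc_eq]

lemma mpow_one {d : Type*} [Fintype d] [DecidableEq d]
    {M : Matrix d d ℂ} (hM : M.IsHermitian) : mpow M 1 = M := by
  rw [mpow_eq_cfc hM]
  simpa using cfc_id' ℝ M hM.isSelfAdjoint

lemma trace_cfc_eq {d : Type*} [Fintype d] [DecidableEq d]
    {M : Matrix d d ℂ} (hM : M.IsHermitian) (f : ℝ → ℝ) :
    (cfc f M).trace.re = ∑ i, f (hM.eigenvalues i) := by
  rw [hM.cfc_eq, Matrix.IsHermitian.cfc, Unitary.conjStarAlgAut_apply, Matrix.trace_mul_comm,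
    ← mul_assoc]
  simp [Matrix.trace_diagonal]

lemma sum_eigenvalues_eq_one {d : Type*} [Fintype d] [DecidableEq d]
    {N : Matrix d d ℂ} (hN : N.IsHermitian) (h : N.trace = 1) : ∑ i, hN.eigenvalues i = 1 := by
  have := congrArg Complex.re (hN.trace_eq_sum_eigenvalues.symm.trans h)
  simpa using this

/-- The squared overlaps `w` of the two eigenbases are doubly stochastic and express
`tr (A^a B^b)` through the eigenvalues. -/
lemma trace_mpow_mul_mpow {d : Type*} [Fintype d] [DecidableEq d]
    {A B : Matrix d d ℂ} (hA : A.IsHermitian) (hB : B.IsHermitian) :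
    ∃ w : d → d → ℝ, (∀ i j, 0 ≤ w i j) ∧ (∀ i, ∑ j, w i j = 1) ∧ (∀ j, ∑ i, w i j = 1) ∧
      ∀ a b : ℝ, (mpow A a * mpow B b).trace.re =
        ∑ i, ∑ j, hA.eigenvalues i ^ a * hB.eigenvalues j ^ b * w i j := by
  set W : Matrix d d ℂ :=
    star (hA.eigenvectorUnitary : Matrix d d ℂ) * (hB.eigenvectorUnitary : Matrix d d ℂ) with hW
  have h1 : W * star W = 1 := by
    rw [hW, star_mul, star_star, mul_assoc, ← mul_assoc _ (star _) _]
    simp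
  have h2 : star W * W = 1 := mul_eq_one_comm.mp h1
  refine ⟨fun i j => Complex.normSq (W i j), fun i j => Complex.normSq_nonneg _, fun i => ?_,
    fun j => ?_, fun a b => ?_⟩
  · have := congrArg Complex.re (congrFun (congrFun h1 i) i)
    simpa [Matrix.mul_apply, Matrix.star_apply, Complex.normSq_apply] using this
  · have := congrArg Complex.re (congrFun (congrFun h2 j) j)
    simpa [Matrix.mul_apply, Matrix.star_apply, Complex.normSq_apply] using this
  · rw [mpow, mpow, dif_pos hA, dif_pos hB, Matrix.IsHermitian.cfc, Matrix.IsHermitian.cfc,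
      Unitary.conjStarAlgAut_apply, Unitary.conjStarAlgAut_apply]
    set D := Matrix.diagonal ((RCLike.ofReal : ℝ → ℂ) ∘ (fun t => t ^ a) ∘ hA.eigenvalues) with hD
    set E := Matrix.diagonal ((RCLike.ofReal : ℝ → ℂ) ∘ (fun t => t ^ b) ∘ hB.eigenvalues) with hE
    have key : ((hA.eigenvectorUnitary : Matrix d d ℂ) * D *
          star (hA.eigenvectorUnitary : Matrix d d ℂ) *
        ((hB.eigenvectorUnitary : Matrix d d ℂ) * E *
          star (hB.eigenvectorUnitary : Matrix d d ℂ))).trace = (D * W * (E * star W)).trace := by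
      rw [hW, star_mul, star_star]
      simp only [mul_assoc]
      rw [Matrix.trace_mul_comm]
      simp only [mul_assoc]
    refine (congrArg Complex.re key).trans ?_
    rw [Matrix.trace]
    simp only [Matrix.diag_apply, Complex.re_sum]
    refine Finset.sum_congr rfl fun i _ => ?_
    rw [Matrix.mul_apply, Complex.re_sum]
    refine Finset.sum_congr rfl fun j _ => ?_
    rw [hD, hE, Matrix.diagonal_mul, Matrix.diagonal_mul, Matrix.star_apply]
    simp [Complex.normSq_apply]
    ring

lemma young_scaled {p r T x y : ℝ} (hr : r = 1 - 1 / p) (hp : 1 < p) (hT : 0 < T)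
    (hx : 0 ≤ x) (hy : 0 ≤ y) :
    x * y ^ r ≤ T ^ (1 / p) * (1 / p * (x ^ p / T) + r * y) := by
  have hp0 : 0 < p := by linarith
  have hr0 : 0 ≤ r := by
    rw [hr, sub_nonneg, div_le_one hp0]; exact hp.le
  have h := Real.geom_mean_le_arith_mean2_weighted (w₁ := 1 / p) (w₂ := r) (p₁ := x ^ p / T)
    (p₂ := y) (by positivity) hr0 (by positivity) hy (by rw [hr]; ring)
  have hxp : (x ^ p) ^ (1 / p) = x := by
    rw [one_div, Real.rpow_rpow_inv hx hp0.ne']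
  rw [Real.div_rpow (by positivity) hT.le, hxp] at h
  have hT' : 0 < T ^ (1 / p) := by positivity
  calc x * y ^ r = T ^ (1 / p) * (x / T ^ (1 / p) * y ^ r) := by field_simp
    _ ≤ _ := mul_le_mul_of_nonneg_left h hT'.le

lemma young_scaled_reverse {p r T x y : ℝ} (hr : r = 1 - 1 / p) (hp0 : 0 < p) (hp : p < 1)
    (hT : 0 < T) (hx : 0 < x) (hy : 0 < y) :
    T ^ (1 / p) * (1 / p * (x ^ p / T) + r * y) ≤ x * y ^ r := by
  have hxp : (x ^ p) ^ (1 / p) = x := by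
    rw [one_div, Real.rpow_rpow_inv hx.le hp0.ne']
  have hT' : 0 < T ^ (1 / p) := by positivity
  have hq : 1 ≤ 1 / p := by rw [le_div_iff₀ hp0]; linarith
  set a := x ^ p / T with ha
  have ha0 : 0 < a := by positivity
  -- Bernoulli's inequality at `a / y = 1 + (a / y - 1)`, homogenised by multiplying with `y`.
  have hb := one_add_mul_self_le_rpow_one_add (s := a / y - 1)
    (by have : 0 < a / y := by positivity
        linarith) hq
  rw [add_sub_cancel, Real.div_rpow ha0.le hy.le] at hb
  have h2 := mul_le_mul_of_nonneg_left hb hy.le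
  have h3 : y * (1 + 1 / p * (a / y - 1)) = 1 / p * a + r * y := by
    rw [hr]; field_simp; ring
  have h4 : y * (a ^ (1 / p) / y ^ (1 / p)) = a ^ (1 / p) * y ^ r := by
    rw [hr, Real.rpow_sub hy, Real.rpow_one]; ring
  rw [h3, h4] at h2
  have h5 : a ^ (1 / p) = x / T ^ (1 / p) := by
    rw [ha, Real.div_rpow (by positivity) hT.le, hxp]
  rw [h5] at h2
  calc _ ≤ T ^ (1 / p) * (x / T ^ (1 / p) * y ^ r) := mul_le_mul_of_nonneg_left h2 hT'.le
    _ = x * y ^ r := by field_simp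

/-- The right-hand side of the scaled Young inequality, averaged against a doubly stochastic `w`. -/
lemma sum_young_rhs {d : Type*} [Fintype d] {w : d → d → ℝ}
    (hrow : ∀ i, ∑ j, w i j = 1) (hcol : ∀ j, ∑ i, w i j = 1) {x y : d → ℝ} {p r T : ℝ}
    (hr : r = 1 - 1 / p) (hT : 0 < T) (hx : ∑ i, x i ^ p = T) (hy : ∑ j, y j = 1) :
    ∑ i, ∑ j, T ^ (1 / p) * (1 / p * (x i ^ p / T) + r * y j) * w i j = T ^ (1 / p) := by
  have h1 : ∑ i, ∑ j, x i ^ p * w i j = T := by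
    simp_rw [← Finset.mul_sum, hrow, mul_one, hx]
  have h2 : ∑ i, ∑ j, y j * w i j = 1 := by
    rw [Finset.sum_comm]
    simp_rw [← Finset.mul_sum, hcol, mul_one, hy]
  have h3 : ∑ i, ∑ j, T ^ (1 / p) * (1 / p * (x i ^ p / T) + r * y j) * w i j
      = T ^ (1 / p) * (1 / p / T) * ∑ i, ∑ j, x i ^ p * w i j
        + T ^ (1 / p) * r * ∑ i, ∑ j, y j * w i j := by
    simp_rw [Finset.mul_sum, ← Finset.sum_add_distrib]
    refine Finset.sum_congr rfl fun i _ => Finset.sum_congr rfl fun j _ => ?_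
    ring
  have h4 : 1 / p / T * T = 1 / p := div_mul_cancel₀ _ hT.ne'
  rw [h3, h1, h2, mul_assoc, h4, hr]
  ring

lemma trace_mpow_pos {d : Type*} [Fintype d] [DecidableEq d] {M : Matrix d d ℂ}
    (hM : M.PosSemidef) (hM0 : M ≠ 0) (p : ℝ) : 0 < (mpow M p).trace.re := by
  rw [mpow_eq_cfc hM.isHermitian, trace_cfc_eq hM.isHermitian]
  obtain ⟨i, hi⟩ : ∃ i, hM.isHermitian.eigenvalues i ≠ 0 := by
    by_contra! h
    exact hM0 (hM.isHermitian.eigenvalues_eq_zero_iff.mp (funext h))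
  refine Finset.sum_pos' (fun j _ => Real.rpow_nonneg (hM.eigenvalues_nonneg j) _)
    ⟨i, Finset.mem_univ _, ?_⟩
  exact Real.rpow_pos_of_pos (lt_of_le_of_ne (hM.eigenvalues_nonneg i) hi.symm) _

/-- The normalised power `M^p / tr (M^p)` attains the extremal value. -/
lemma trace_mul_mpow_optimizer {d : Type*} [Fintype d] [DecidableEq d] {M : Matrix d d ℂ}
    (hM : M.PosSemidef) (hM0 : M ≠ 0) {p r : ℝ} (hr : r = 1 - 1 / p) (hp : 0 < p) :
    ((M * mpow (((((mpow M p).trace).re)⁻¹ : ℂ) • mpow M p) r).trace).re =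
      ((mpow M p).trace).re ^ (1 / p) := by
  have hT := trace_mpow_pos hM hM0 p
  have hH := hM.isHermitian
  have hTs : (mpow M p).trace.re = ∑ i, hH.eigenvalues i ^ p := by
    rw [mpow_eq_cfc hH, trace_cfc_eq hH]
  set T := (mpow M p).trace.re with hTdef
  have hN : ((T : ℂ)⁻¹) • mpow M p = cfc (fun t : ℝ => T⁻¹ * t ^ p) M := by
    have h := cfc_smul (T⁻¹ : ℝ) (fun t : ℝ => t ^ p) M (continuousOn_spectrum M _)
    simp only [smul_eq_mul] at h
    rw [h, mpow_eq_cfc hH, ← Complex.ofReal_inv]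
    exact Complex.coe_smul _ _
  have hNH : (cfc (fun t : ℝ => T⁻¹ * t ^ p) M).IsHermitian :=
    cfc_predicate (R := ℝ) (p := IsSelfAdjoint) _ M
  have hprod : M * mpow (((T : ℂ)⁻¹) • mpow M p) r
      = cfc (fun t : ℝ => t * (T⁻¹ * t ^ p) ^ r) M := by
    rw [hN, mpow_eq_cfc hNH, ← cfc_comp' (fun t : ℝ => t ^ r) (fun t : ℝ => T⁻¹ * t ^ p) M
      ((Matrix.finite_real_spectrum.image _).continuousOn _) (continuousOn_spectrum M _)
      hH.isSelfAdjoint,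
      cfc_mul (fun t : ℝ => t) _ M (continuousOn_spectrum M _) (continuousOn_spectrum M _),
      cfc_id' ℝ M hH.isSelfAdjoint]
  rw [hprod, trace_cfc_eq hH]
  have hterm : ∀ t : ℝ, 0 ≤ t → t * (T⁻¹ * t ^ p) ^ r = T⁻¹ ^ r * t ^ p := by
    intro t ht
    rcases ht.eq_or_lt with rfl | ht
    · simp [Real.zero_rpow hp.ne']
    · rw [Real.mul_rpow (by positivity) (by positivity), ← Real.rpow_mul ht.le]
      have : p = 1 + p * r := by rw [hr]; field_simp; ring
      conv_rhs => rw [this, Real.rpow_add ht, Real.rpow_one]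
      ring
  rw [Finset.sum_congr rfl fun i _ => hterm _ (hM.eigenvalues_nonneg i), ← Finset.mul_sum, ← hTs,
    Real.inv_rpow hT.le, ← Real.rpow_neg hT.le]
  conv_lhs => rw [← Real.rpow_one T, ← Real.rpow_mul hT.le, ← Real.rpow_add hT]
  congr 1
  rw [hr]; ring


/-- **Variational characterization of the Schatten p-(quasi)norm of a positive
semidefinite matrix.** Let `M ≠ 0` be positive semidefinite and `r = 1 - 1/p`.
(i) If `p > 1`, then `Re tr (M N^r) ≤ (Re tr (M^p))^(1/p)` for every density matrix `N`,
with equality at `N = M^p / tr (M^p)`.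
(ii) If `0 < p < 1` and `M` is positive definite, then `Re tr (M N^r) ≥ (Re tr (M^p))^(1/p)`
for every positive definite density matrix `N`, with equality at `N = M^p / tr (M^p)`. -/
theorem schatten_variational {n : ℕ} (M : Matrix (Fin n) (Fin n) ℂ)
    (hM : M.PosSemidef) (hM0 : M ≠ 0) (p r : ℝ) (hr : r = 1 - 1 / p) :
    (1 < p →
      (∀ N : Matrix (Fin n) (Fin n) ℂ, N.PosSemidef → N.trace = 1 →
        ((M * mpow N r).trace).re ≤ ((mpow M p).trace).re ^ (1 / p)) ∧
      ((M * mpow (((((mpow M p).trace).re)⁻¹ : ℂ) • mpow M p) r).trace).re =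
        ((mpow M p).trace).re ^ (1 / p))
    ∧
    (0 < p → p < 1 → M.PosDef →
      (∀ N : Matrix (Fin n) (Fin n) ℂ, N.PosDef → N.trace = 1 →
        ((M * mpow N r).trace).re ≥ ((mpow M p).trace).re ^ (1 / p)) ∧
      ((M * mpow (((((mpow M p).trace).re)⁻¹ : ℂ) • mpow M p) r).trace).re =
        ((mpow M p).trace).re ^ (1 / p)) := by
  have hH := hM.isHermitian
  have hT := trace_mpow_pos hM hM0 p
  have hTs : ∑ i, hH.eigenvalues i ^ p = (mpow M p).trace.re := by
    rw [mpow_eq_cfc hH, trace_cfc_eq hH]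
  refine ⟨fun hp => ⟨fun N hN hN1 => ?_, ?_⟩, fun hp0 hp hMp => ⟨fun N hN hN1 => ?_, ?_⟩⟩
  · obtain ⟨w, hw, hrow, hcol, htr⟩ := trace_mpow_mul_mpow hH hN.isHermitian
    have h := htr 1 r
    rw [mpow_one hH] at h
    rw [h, ← sum_young_rhs hrow hcol hr hT hTs (sum_eigenvalues_eq_one hN.isHermitian hN1)]
    refine Finset.sum_le_sum fun i _ => Finset.sum_le_sum fun j _ =>
      mul_le_mul_of_nonneg_right ?_ (hw i j)
    rw [Real.rpow_one]
    exact young_scaled hr hp hT (hM.eigenvalues_nonneg i) (hN.eigenvalues_nonneg j)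
  · exact trace_mul_mpow_optimizer hM hM0 hr (by linarith)
  · obtain ⟨w, hw, hrow, hcol, htr⟩ := trace_mpow_mul_mpow hH hN.isHermitian
    have h := htr 1 r
    rw [mpow_one hH] at h
    rw [ge_iff_le, h,
      ← sum_young_rhs hrow hcol hr hT hTs (sum_eigenvalues_eq_one hN.isHermitian hN1)]
    refine Finset.sum_le_sum fun i _ => Finset.sum_le_sum fun j _ =>
      mul_le_mul_of_nonneg_right ?_ (hw i j)
    rw [Real.rpow_one]
    exact young_scaled_reverse hr hp0 hp hT (hMp.eigenvalues_pos i) (hN.eigenvalues_pos j)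
  · exact trace_mul_mpow_optimizer hM hM0 hr hp0
end

section
/- Concavity of the fidelity in each argument: let ρ₁, ρ₂, τ be n×n density matrices and λ ∈ [0,1]. Then F(λ·ρ₁ + (1−λ)·ρ₂, τ) ≥ λ·F(ρ₁, τ) + (1−λ)·F(ρ₂, τ). -/
/-!
The square of `tr √(·)` is superadditive on positive semidefinite matrices: if `M = A + B`, then
`(tr √A)² + (tr √B)² ≤ (tr √M)²`. Together with its homogeneity of degree one and the linearity of
`ρ ↦ √τ ρ √τ`, this is the concavity of the fidelity.

For superadditivity, pass to an orthonormal eigenbasis of `M`, in which `M` has diagonal entries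
`mᵢ = aᵢ + bᵢ`. Cauchy–Schwarz bounds each diagonal entry of `√A` by `√aᵢ`
(`trace_re_le_sum_sqrt`), so `tr √A ≤ ∑ √aᵢ` and likewise for `B`, while `tr √M = ∑ √(aᵢ + bᵢ)`.
What is left is the triangle inequality for the plane vectors `(√aᵢ, √bᵢ)` (`sum_sqrt_sq_add_le`).
-/

open Matrix
open scoped ComplexOrder

/-- The fidelity `F(ρ,τ) = (tr √(√τ ρ √τ))²` of positive semidefinite matrices. -/
noncomputable def fidelity {d : Type*} [Fintype d] [DecidableEq d]
    (ρ τ : Matrix d d ℂ) : ℝ :=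
  (((mpow (mpow τ (1/2) * ρ * mpow τ (1/2)) (1/2)).trace).re) ^ 2

theorem mpow_eq {d : Type*} [Fintype d] [DecidableEq d] {M : Matrix d d ℂ} (hM : M.IsHermitian)
    (c : ℝ) : mpow M c = (hM.eigenvectorUnitary : Matrix d d ℂ) *
      diagonal (fun i => ((hM.eigenvalues i ^ c : ℝ) : ℂ)) *
      (hM.eigenvectorUnitary : Matrix d d ℂ)ᴴ := by
  rw [mpow, dif_pos hM, Matrix.IsHermitian.cfc, Unitary.conjStarAlgAut_apply]
  rfl

theorem mpow_isHermitian {d : Type*} [Fintype d] [DecidableEq d] {M : Matrix d d ℂ}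
    (hM : M.IsHermitian) (c : ℝ) : (mpow M c).IsHermitian := by
  rw [mpow_eq hM]
  apply isHermitian_mul_mul_conjTranspose
  apply isHermitian_diagonal_of_self_adjoint
  ext i
  simp

theorem mpow_half_mul_self {d : Type*} [Fintype d] [DecidableEq d] {M : Matrix d d ℂ}
    (hM : M.PosSemidef) : mpow M (1/2) * mpow M (1/2) = M := by
  have hU : (hM.1.eigenvectorUnitary : Matrix d d ℂ)ᴴ * hM.1.eigenvectorUnitary = 1 :=
    Unitary.coe_star_mul_self hM.1.eigenvectorUnitary
  have hs := hM.1.spectral_theorem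
  rw [Unitary.conjStarAlgAut_apply] at hs
  conv_rhs => rw [hs]
  rw [mpow_eq hM.1]
  set U := (hM.1.eigenvectorUnitary : Matrix d d ℂ)
  set D := diagonal (fun i => ((hM.1.eigenvalues i ^ (1/2:ℝ) : ℝ) : ℂ)) with hD
  have hDD : D * D = diagonal (RCLike.ofReal ∘ hM.1.eigenvalues) := by
    rw [hD, diagonal_mul_diagonal]
    congr 1
    ext i
    rw [← Complex.ofReal_mul, ← Real.sqrt_eq_rpow, Real.mul_self_sqrt (hM.eigenvalues_nonneg i)]
    rfl
  calc U * D * Uᴴ * (U * D * Uᴴ) = U * D * (Uᴴ * U) * D * Uᴴ := by simp only [Matrix.mul_assoc]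
    _ = _ := by rw [hU, Matrix.mul_one, Matrix.mul_assoc U, hDD]; rfl

/-- The trace of the square root of `M` is read off the diagonal of `M` in its eigenbasis. -/
theorem trace_mpow_half {d : Type*} [Fintype d] [DecidableEq d] {M : Matrix d d ℂ}
    (hM : M.IsHermitian) : (mpow M (1/2)).trace.re =
      ∑ i, √(((hM.eigenvectorUnitary : Matrix d d ℂ)ᴴ * M * hM.eigenvectorUnitary) i i).re := by
  have hU : (hM.eigenvectorUnitary : Matrix d d ℂ)ᴴ * hM.eigenvectorUnitary = 1 :=
    Unitary.coe_star_mul_self hM.eigenvectorUnitary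
  have hs : M = (hM.eigenvectorUnitary : Matrix d d ℂ) * diagonal (RCLike.ofReal ∘ hM.eigenvalues)
      * (hM.eigenvectorUnitary : Matrix d d ℂ)ᴴ := by
    have hs := hM.spectral_theorem
    rwa [Unitary.conjStarAlgAut_apply] at hs
  have hd : (hM.eigenvectorUnitary : Matrix d d ℂ)ᴴ * M *
      (hM.eigenvectorUnitary : Matrix d d ℂ) = diagonal (RCLike.ofReal ∘ hM.eigenvalues) := by
    set U := (hM.eigenvectorUnitary : Matrix d d ℂ)
    set D : Matrix d d ℂ := diagonal (RCLike.ofReal ∘ hM.eigenvalues)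
    clear_value U D
    calc Uᴴ * M * U = (Uᴴ * U) * D * (Uᴴ * U) := by rw [hs]; simp only [Matrix.mul_assoc]
      _ = D := by rw [hU, Matrix.mul_one, Matrix.one_mul]
  rw [hd, mpow_eq hM, Matrix.trace_mul_comm, ← Matrix.mul_assoc, hU, Matrix.one_mul,
    trace_diagonal, Complex.re_sum]
  refine Finset.sum_congr rfl fun i _ => ?_
  rw [diagonal_apply_eq, Complex.ofReal_re, Real.sqrt_eq_rpow]
  rfl

/-- In any orthonormal basis, the trace of a Hermitian `R` is at most the sum of the square roots
of the diagonal entries of `R²`: the square of a diagonal entry of `R` is one of the nonnegative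
terms `|Rᵢⱼ|²` that add up to `(R²)ᵢᵢ`. -/
theorem trace_re_le_sum_sqrt {d : Type*} [Fintype d] [DecidableEq d] {R U : Matrix d d ℂ}
    (hR : R.IsHermitian) (hU : U * Uᴴ = 1) :
    R.trace.re ≤ ∑ i, √((Uᴴ * (R * R) * U) i i).re := by
  have ht : R.trace = (Uᴴ * R * U).trace := by
    rw [Matrix.trace_mul_comm, ← Matrix.mul_assoc, hU, Matrix.one_mul]
  have hq : Uᴴ * (R * R) * U = (Uᴴ * R * U) * (Uᴴ * R * U) := by
    calc Uᴴ * (R * R) * U = Uᴴ * R * 1 * R * U := by simp only [Matrix.mul_assoc, Matrix.one_mul]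
      _ = _ := by rw [← hU]; simp only [Matrix.mul_assoc]
  have hH : (Uᴴ * R * U).IsHermitian := isHermitian_conjTranspose_mul_mul U hR
  rw [ht, hq]
  set Q := Uᴴ * R * U
  rw [Matrix.trace, Complex.re_sum]
  refine Finset.sum_le_sum fun i _ => Real.le_sqrt_of_sq_le ?_
  have h1 : ((Q * Q) i i).re = ∑ j, Complex.normSq (Q i j) := by
    rw [Matrix.mul_apply, Complex.re_sum]
    refine Finset.sum_congr rfl fun j _ => ?_
    rw [← hH.apply j i, Complex.star_def, Complex.mul_conj, Complex.ofReal_re]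
  rw [h1]
  calc (Q i i).re ^ 2 ≤ Complex.normSq (Q i i) := by
        rw [Complex.normSq_apply]; nlinarith [mul_self_nonneg (Q i i).im]
    _ ≤ _ := Finset.single_le_sum (f := fun j => Complex.normSq (Q i j))
        (fun j _ => Complex.normSq_nonneg _) (Finset.mem_univ i)

theorem sum_sqrt_sq_add_le {d : Type*} [Fintype d] (a b : d → ℝ)
    (ha : ∀ i, 0 ≤ a i) (hb : ∀ i, 0 ≤ b i) :
    (∑ i, √(a i)) ^ 2 + (∑ i, √(b i)) ^ 2 ≤ (∑ i, √(a i + b i)) ^ 2 := by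
  -- The plane vectors are encoded as complex numbers.
  have h := norm_sum_le Finset.univ (fun i => (⟨√(a i), √(b i)⟩ : ℂ))
  have hn : ∀ i, ‖(⟨√(a i), √(b i)⟩ : ℂ)‖ = √(a i + b i) := fun i => by
    rw [Complex.norm_def, Complex.normSq_mk, Real.mul_self_sqrt (ha i), Real.mul_self_sqrt (hb i)]
  simp only [hn] at h
  have h2 := pow_le_pow_left₀ (norm_nonneg _) h 2
  rw [Complex.sq_norm, Complex.normSq_apply, Complex.re_sum, Complex.im_sum] at h2
  simpa only [sq] using h2

/-- Superadditivity of `(tr √·)²`, for Hermitian `R`, `S` in the place of `√A`, `√B`. Only the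
squares `R²` and `S²` enter the bound, so positivity of `R` and `S` is replaced by nonnegativity of
their traces. -/
theorem sq_trace_add_le {d : Type*} [Fintype d] [DecidableEq d] {M R S : Matrix d d ℂ}
    (hM : M.IsHermitian) (hR : R.IsHermitian) (hS : S.IsHermitian) (h : M = R * R + S * S)
    (hR0 : 0 ≤ R.trace.re) (hS0 : 0 ≤ S.trace.re) :
    R.trace.re ^ 2 + S.trace.re ^ 2 ≤ (mpow M (1/2)).trace.re ^ 2 := by
  have hU : (hM.eigenvectorUnitary : Matrix d d ℂ) * (hM.eigenvectorUnitary : Matrix d d ℂ)ᴴ = 1 :=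
    Unitary.coe_mul_star_self hM.eigenvectorUnitary
  rw [trace_mpow_half hM]
  generalize (hM.eigenvectorUnitary : Matrix d d ℂ) = U at hU ⊢
  have hpos : ∀ T : Matrix d d ℂ, T.IsHermitian → ∀ i, 0 ≤ ((Uᴴ * (T * T) * U) i i).re := by
    intro T hT i
    have hp : (Uᴴ * (T * T) * U).PosSemidef := by
      have := (posSemidef_conjTranspose_mul_self T).conjTranspose_mul_mul_same U
      rwa [hT.eq] at this
    exact (Complex.le_def.1 (hp.diag_nonneg (i := i))).1
  have hsum : ∀ i, ((Uᴴ * M * U) i i).re =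
      ((Uᴴ * (R * R) * U) i i).re + ((Uᴴ * (S * S) * U) i i).re := by
    intro i
    rw [h, Matrix.mul_add, Matrix.add_mul, Matrix.add_apply, Complex.add_re]
  simp only [hsum]
  refine le_trans (add_le_add ?_ ?_) (sum_sqrt_sq_add_le _ _ (hpos R hR) (hpos S hS))
  · exact pow_le_pow_left₀ hR0 (trace_re_le_sum_sqrt hR hU) 2
  · exact pow_le_pow_left₀ hS0 (trace_re_le_sum_sqrt hS hU) 2

/-- **Concavity of the fidelity in each argument**: for density matrices `ρ₁, ρ₂, τ` and
`λ ∈ [0,1]`, `F(λρ₁ + (1-λ)ρ₂, τ) ≥ λ F(ρ₁,τ) + (1-λ) F(ρ₂,τ)`. -/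
theorem fidelity_concave {n : ℕ} (ρ₁ ρ₂ τ : Matrix (Fin n) (Fin n) ℂ)
    (hρ₁ : ρ₁.PosSemidef) (hρ₁1 : ρ₁.trace = 1)
    (hρ₂ : ρ₂.PosSemidef) (hρ₂1 : ρ₂.trace = 1)
    (hτ : τ.PosSemidef) (hτ1 : τ.trace = 1)
    (l : ℝ) (hl0 : 0 ≤ l) (hl1 : l ≤ 1) :
    fidelity ((l : ℂ) • ρ₁ + ((1 - l : ℝ) : ℂ) • ρ₂) τ ≥
      l * fidelity ρ₁ τ + (1 - l) * fidelity ρ₂ τ := by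
  have hT := mpow_isHermitian hτ.1 (1/2)
  have hl2 : 0 ≤ 1 - l := sub_nonneg.2 hl1
  unfold fidelity
  generalize mpow τ (1/2) = T at hT ⊢
  have hA : ∀ ρ : Matrix (Fin n) (Fin n) ℂ, ρ.PosSemidef → (T * ρ * T).PosSemidef := by
    intro ρ hρ
    have := hρ.conjTranspose_mul_mul_same T
    rwa [hT.eq] at this
  -- The square root of `c • T ρ T` is `√c • √(T ρ T)`.
  have key : ∀ (c : ℝ) (ρ : Matrix (Fin n) (Fin n) ℂ), 0 ≤ c → ρ.PosSemidef →
      ∃ R : Matrix (Fin n) (Fin n) ℂ, R.IsHermitian ∧ R * R = (c : ℂ) • (T * ρ * T) ∧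
        0 ≤ R.trace.re ∧ R.trace.re ^ 2 = c * (mpow (T * ρ * T) (1/2)).trace.re ^ 2 := by
    intro c ρ hc hρ
    have htr : (((√c : ℝ) : ℂ) • mpow (T * ρ * T) (1/2)).trace.re =
        √c * (mpow (T * ρ * T) (1/2)).trace.re := by
      rw [Matrix.trace_smul, smul_eq_mul, Complex.re_ofReal_mul]
    refine ⟨((√c : ℝ) : ℂ) • mpow (T * ρ * T) (1/2), ?_, ?_, ?_, ?_⟩
    · rw [Matrix.IsHermitian, conjTranspose_smul, (mpow_isHermitian (hA ρ hρ).1 _).eq,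
        Complex.star_def, Complex.conj_ofReal]
    · rw [Matrix.smul_mul, Matrix.mul_smul, smul_smul, mpow_half_mul_self (hA ρ hρ),
        ← Complex.ofReal_mul, Real.mul_self_sqrt hc]
    · rw [htr, trace_mpow_half (hA ρ hρ).1]
      positivity
    · rw [htr, mul_pow, Real.sq_sqrt hc]
  obtain ⟨R, hR, hRR, hR0, hRt⟩ := key l ρ₁ hl0 hρ₁
  obtain ⟨S, hS, hSS, hS0, hSt⟩ := key (1 - l) ρ₂ hl2 hρ₂
  have hM : T * ((l : ℂ) • ρ₁ + ((1 - l : ℝ) : ℂ) • ρ₂) * T = R * R + S * S := by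
    rw [hRR, hSS, Matrix.mul_add, Matrix.add_mul, Matrix.mul_smul, Matrix.mul_smul,
      Matrix.smul_mul, Matrix.smul_mul]
  have hMh : (T * ((l : ℂ) • ρ₁ + ((1 - l : ℝ) : ℂ) • ρ₂) * T).IsHermitian := by
    rw [hM, Matrix.IsHermitian, conjTranspose_add, conjTranspose_mul, conjTranspose_mul, hR.eq,
      hS.eq]
  rw [← hRt, ← hSt]
  exact sq_trace_add_le hMh hR hS hM hR0 hS0
end

section
/- Pinching inequality: let m ≥ 1 and let P : Fin m → M_n(ℂ) be a family of Hermitian idempotent matrices (P x · P x = P x and each P x Hermitian) that are mutually orthogonal (P x · P y = 0 for x ≠ y) and satisfy ∑_x P x = 1. Then for every n×n positive semidefinite complex matrix M, the matrix (∑_x P x · M · P x) − (1/m)·M is positive semidefinite. -/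
/-! The proof rests on the variance-type identity
`∑ x, ∑ y, (P x - P y) * M * (P x - P y) = 2 m ∑ x, P x * M * P x - 2 M`,
which follows by expanding the product and using `∑ x, P x = 1` in the two cross terms.
Each summand on the left is the congruence of `M` by the Hermitian matrix `P x - P y`, hence
positive semidefinite; dividing by `2 m` gives the inequality. -/

open Matrix
open scoped ComplexOrder

/-- Variance-type identity for matrices summing to the identity. -/
lemma sum_sub_mul_mul_sub {n m : ℕ} (P : Fin m → Matrix (Fin n) (Fin n) ℂ)
    (hsum : ∑ x, P x = 1) (M : Matrix (Fin n) (Fin n) ℂ) :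
    ∑ x, ∑ y, (P x - P y) * M * (P x - P y)
      = (2 * m : ℂ) • (∑ x, P x * M * P x) - (2 : ℂ) • M := by
  have hcross : ∑ x, ∑ y, P x * M * P y = M := by
    simp_rw [← Finset.mul_sum, hsum, mul_one, ← Finset.sum_mul, hsum, one_mul]
  have hcross' : ∑ x, ∑ y, P y * M * P x = M := by
    rw [Finset.sum_comm, hcross]
  have hexp : ∀ x y, (P x - P y) * M * (P x - P y)
      = P x * M * P x + P y * M * P y - P x * M * P y - P y * M * P x := by
    intro x y
    noncomm_ring
  simp_rw [hexp, Finset.sum_sub_distrib, Finset.sum_add_distrib]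
  rw [hcross, hcross']
  simp only [Finset.sum_const, Finset.card_univ, Fintype.card_fin, ← Finset.smul_sum,
    ← Nat.cast_smul_eq_nsmul ℂ]
  module

/-- **Pinching inequality (Hayashi)**: if `P : Fin m → M_n(ℂ)` is a family of mutually
orthogonal Hermitian projectors summing to the identity, then for every positive
semidefinite `M` we have `∑ x, P x * M * P x ≥ (1/m) • M` in the Loewner order. -/
theorem pinching_inequality {n m : ℕ} (hm : 1 ≤ m)
    (P : Fin m → Matrix (Fin n) (Fin n) ℂ)
    (hherm : ∀ x, (P x).IsHermitian)
    (hidem : ∀ x, P x * P x = P x)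
    (horth : ∀ x y, x ≠ y → P x * P y = 0)
    (hsum : ∑ x, P x = 1)
    (M : Matrix (Fin n) (Fin n) ℂ) (hM : M.PosSemidef) :
    ((∑ x, P x * M * P x) - ((m : ℂ))⁻¹ • M).PosSemidef := by
  have hm0 : (m : ℂ) ≠ 0 := by
    exact_mod_cast (Nat.one_le_iff_ne_zero.mp hm)
  have hpos : (∑ x, ∑ y, (P x - P y) * M * (P x - P y)).PosSemidef := by
    refine Matrix.posSemidef_sum _ fun x _ => Matrix.posSemidef_sum _ fun y _ => ?_
    have h := hM.mul_mul_conjTranspose_same (P x - P y)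
    rwa [((hherm x).sub (hherm y)).eq] at h
  have hcoef : (0 : ℂ) ≤ (2 * m : ℂ)⁻¹ := by
    have h : (0 : ℝ) ≤ (2 * m : ℝ)⁻¹ := by positivity
    have h' := Complex.zero_le_real.mpr h
    push_cast at h'
    exact h'
  have hres := hpos.smul hcoef
  rw [sum_sub_mul_mul_sub P hsum M, smul_sub, smul_smul, smul_smul,
    inv_mul_cancel₀ (mul_ne_zero two_ne_zero hm0), one_smul] at hres
  have hinv : (2 * m : ℂ)⁻¹ * 2 = (m : ℂ)⁻¹ := by
    field_simp
  rwa [hinv] at hres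
end

section
/- Convexity in α of the logarithm of the classical Rényi Q-quantity: let ι be a finite type and ρ, σ : ι → ℝ with ρ x ≥ 0 and σ x ≥ 0 for all x, ρ not identically zero, and such that σ x = 0 implies ρ x = 0. Then the function α ↦ ln(∑_{x with ρ x ≠ 0} (ρ x)^α · (σ x)^{1−α}) is convex on the interval (0, ∞). Moreover, if there is no constant a > 0 with ρ x = a·σ x for every x in the support of ρ, then this function is strictly convex on (0, ∞). -/
/-!
On the support of `ρ` both `ρ x` and `σ x` are positive, so
`ρ x ^ α * σ x ^ (1 - α) = exp (log (σ x) + α * log (ρ x / σ x))`, and the function in question is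
a log-sum-exp `L α = log (∑ x, exp (c x + α * d x))` of affine functions of `α`.

The sum is normalized: `∑ x, exp (c x + α * d x - L α) = 1` for every `α`. Applying convexity of
`exp` term by term to the exponents `u x = c x + α * d x - L α` and `v x = c x + β * d x - L β`
gives `∑ x, exp (a * u x + b * v x) ≤ a + b = 1`, which is exactly
`L (a * α + b * β) ≤ a * L α + b * L β`. If equality held with `α ≠ β` and `0 < a, b`, strict
convexity of `exp` would force `u x = v x` for all `x`, so that `d x = log (ρ x / σ x)` would be
constant on the support; this is the case excluded in the strict statement.
-/

/-- The log-sum-exp of the affine functions `α ↦ c i + α * d i`, `i ∈ s`. -/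
noncomputable def logSumExp {ι : Type*} (s : Finset ι) (c d : ι → ℝ) (α : ℝ) : ℝ :=
  Real.log (∑ i ∈ s, Real.exp (c i + α * d i))

section LogSumExp

variable {ι : Type*} {s : Finset ι}

theorem sum_exp_affine_pos (hs : s.Nonempty) (c d : ι → ℝ) (α : ℝ) : 0 < ∑ i ∈ s, Real.exp (c i + α * d i) :=
  Finset.sum_pos (fun _ _ => Real.exp_pos _) hs

theorem sum_exp_sub_eq (hs : s.Nonempty) (c d : ι → ℝ) (α M : ℝ) :
    ∑ i ∈ s, Real.exp (c i + α * d i - M) = Real.exp (logSumExp s c d α - M) := by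
  simp_rw [Real.exp_sub]
  rw [← Finset.sum_div, logSumExp, Real.exp_log (sum_exp_affine_pos hs c d α)]

/-- Subtracting the log-sum-exp from the exponents normalizes the sum. -/
theorem sum_exp_sub_logSumExp (hs : s.Nonempty) (c d : ι → ℝ) (α : ℝ) :
    ∑ i ∈ s, Real.exp (c i + α * d i - logSumExp s c d α) = 1 := by
  rw [sum_exp_sub_eq hs, sub_self, Real.exp_zero]

theorem convexOn_logSumExp (hs : s.Nonempty) (c d : ι → ℝ) : ConvexOn ℝ Set.univ (logSumExp s c d) := by
  refine ⟨convex_univ, fun α _ β _ a b ha hb hab => ?_⟩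
  simp only [smul_eq_mul]
  rw [← sub_nonpos, ← Real.exp_le_one_iff, ← sum_exp_sub_eq hs]
  calc _ ≤ ∑ i ∈ s, (a * Real.exp (c i + α * d i - logSumExp s c d α)
            + b * Real.exp (c i + β * d i - logSumExp s c d β)) := by
        refine Finset.sum_le_sum fun i _ => ?_
        have h := convexOn_exp.2 (Set.mem_univ (c i + α * d i - logSumExp s c d α))
          (Set.mem_univ (c i + β * d i - logSumExp s c d β)) ha hb hab
        simp only [smul_eq_mul] at h
        refine le_of_eq_of_le (congrArg Real.exp ?_) h
        linear_combination -(c i) * hab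
    _ = 1 := by
        rw [Finset.sum_add_distrib, ← Finset.mul_sum, ← Finset.mul_sum,
          sum_exp_sub_logSumExp hs, sum_exp_sub_logSumExp hs, mul_one, mul_one, hab]

/-- The log-sum-exp is strictly convex when the slopes `d i`, `i ∈ s`, are not all equal. -/
theorem strictConvexOn_logSumExp (hs : s.Nonempty) (c d : ι → ℝ) (hd : ¬ ∃ k, ∀ i ∈ s, d i = k) :
    StrictConvexOn ℝ Set.univ (logSumExp s c d) := by
  refine ⟨convex_univ, fun α _ β _ hne a b ha hb hab => ?_⟩
  refine lt_of_le_of_ne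
    ((convexOn_logSumExp hs c d).2 (Set.mem_univ α) (Set.mem_univ β) ha.le hb.le hab) fun heq => ?_
  simp only [smul_eq_mul] at heq
  -- At equality the termwise inequalities between sums both equal to `1` are all equalities.
  have hsum : ∑ i ∈ s, Real.exp (a * (c i + α * d i - logSumExp s c d α)
        + b * (c i + β * d i - logSumExp s c d β))
      = ∑ i ∈ s, (a * Real.exp (c i + α * d i - logSumExp s c d α)
        + b * Real.exp (c i + β * d i - logSumExp s c d β)) := by
    rw [Finset.sum_add_distrib, ← Finset.mul_sum, ← Finset.mul_sum,
      sum_exp_sub_logSumExp hs, sum_exp_sub_logSumExp hs, mul_one, mul_one, hab,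
      ← sum_exp_sub_logSumExp hs c d (a * α + b * β)]
    refine Finset.sum_congr rfl fun i _ => congrArg Real.exp ?_
    linear_combination c i * hab + heq
  have hterm := (Finset.sum_eq_sum_iff_of_le fun i _ => by
    simpa only [smul_eq_mul] using
      convexOn_exp.2 (Set.mem_univ (c i + α * d i - logSumExp s c d α))
        (Set.mem_univ (c i + β * d i - logSumExp s c d β)) ha.le hb.le hab).1 hsum
  -- Equality of the two exponents determines the slope `d i` independently of `i`.
  refine hd ⟨(logSumExp s c d α - logSumExp s c d β) / (α - β), fun i hi => ?_⟩
  have huv : c i + α * d i - logSumExp s c d α = c i + β * d i - logSumExp s c d β := by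
    by_contra hcon
    have h := strictConvexOn_exp.2 (Set.mem_univ _) (Set.mem_univ _) hcon ha hb hab
    simp only [smul_eq_mul] at h
    exact h.ne (hterm i hi)
  rw [eq_div_iff (sub_ne_zero.2 hne)]
  linear_combination huv

end LogSumExp

/-- **Convexity in `α` of the logarithm of the classical Rényi Q-quantity.**
Let `ρ, σ : ι → ℝ` be nonnegative, with `ρ` not identically zero and with the support of
`ρ` contained in the support of `σ`. Then
`α ↦ ln (∑_{x : ρ x ≠ 0} (ρ x)^α (σ x)^(1-α))` is convex on `(0, ∞)`, and strictly convex
unless `ρ = a·σ` on the support of `ρ` for some constant `a > 0`. -/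
theorem renyi_log_convex {ι : Type*} [Fintype ι] (ρ σ : ι → ℝ)
    (hρ : ∀ x, 0 ≤ ρ x) (hσ : ∀ x, 0 ≤ σ x)
    (hρ0 : ∃ x, ρ x ≠ 0) (hdom : ∀ x, σ x = 0 → ρ x = 0) :
    ConvexOn ℝ (Set.Ioi (0 : ℝ))
      (fun α : ℝ => Real.log
        (∑ x ∈ Finset.univ.filter (fun x => ρ x ≠ 0), ρ x ^ α * σ x ^ (1 - α))) ∧
    ((¬ ∃ a : ℝ, 0 < a ∧ ∀ x, ρ x ≠ 0 → ρ x = a * σ x) →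
      StrictConvexOn ℝ (Set.Ioi (0 : ℝ))
        (fun α : ℝ => Real.log
          (∑ x ∈ Finset.univ.filter (fun x => ρ x ≠ 0), ρ x ^ α * σ x ^ (1 - α)))) := by
  have hρpos : ∀ x, ρ x ≠ 0 → 0 < ρ x := fun x hx => (hρ x).lt_of_ne' hx
  have hσpos : ∀ x, ρ x ≠ 0 → 0 < σ x := fun x hx =>
    (hσ x).lt_of_ne' fun h => hx (hdom x h)
  have hs : (Finset.univ.filter (fun x => ρ x ≠ 0)).Nonempty := by
    obtain ⟨x, hx⟩ := hρ0
    exact ⟨x, by simpa using hx⟩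
  have hL : (fun α : ℝ => Real.log
        (∑ x ∈ Finset.univ.filter (fun x => ρ x ≠ 0), ρ x ^ α * σ x ^ (1 - α)))
      = logSumExp (Finset.univ.filter (fun x => ρ x ≠ 0)) (fun x => Real.log (σ x))
        (fun x => Real.log (ρ x / σ x)) := by
    funext α
    refine congrArg Real.log (Finset.sum_congr rfl fun x hx => ?_)
    have hx : ρ x ≠ 0 := by simpa using hx
    rw [Real.rpow_def_of_pos (hρpos x hx), Real.rpow_def_of_pos (hσpos x hx), ← Real.exp_add]
    dsimp only
    rw [Real.log_div hx (hσpos x hx).ne']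
    congr 1
    ring
  rw [hL]
  refine ⟨(convexOn_logSumExp hs _ _).subset (Set.subset_univ _) (convex_Ioi 0), fun hna =>
    (strictConvexOn_logSumExp hs _ _ ?_).subset (Set.subset_univ _) (convex_Ioi 0)⟩
  rintro ⟨k, hk⟩
  refine hna ⟨Real.exp k, Real.exp_pos k, fun x hx => ?_⟩
  rw [← hk x (by simpa using hx), Real.exp_log (div_pos (hρpos x hx) (hσpos x hx)),
    div_mul_cancel₀ _ (hσpos x hx).ne']
end

section
/- Joint convexity of (A,B) ↦ B·A⁻¹·B and joint concavity of the matrix harmonic mean: let A₁, A₂, B₁, B₂ be n×n positive definite complex matrices and λ ∈ [0,1], and write Ā = λ·A₁ + (1−λ)·A₂ and B̄ = λ·B₁ + (1−λ)·B₂. Then (i) λ·B₁·A₁⁻¹·B₁ + (1−λ)·B₂·A₂⁻¹·B₂ − B̄·Ā⁻¹·B̄ is positive semidefinite, and (ii) (Ā⁻¹ + B̄⁻¹)⁻¹ − λ·(A₁⁻¹ + B₁⁻¹)⁻¹ − (1−λ)·(A₂⁻¹ + B₂⁻¹)⁻¹ is positive semidefinite. -/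
open Matrix
open scoped ComplexOrder

/-!
The function `B A⁻¹ B` is a supremum of expressions that are real-affine in `(A, B)`: completing
the square gives, for every matrix `S`,
`B A⁻¹ B - (B S + Sᴴ B - Sᴴ A S) = (B - A S)ᴴ A⁻¹ (B - A S) ≥ 0`,
with equality at `S = A⁻¹ B` (`posSemidef_inv_sub_affine`). Adding these inequalities for
`(A₁, B₁)` and `(A₂, B₂)`, with weights `l` and `1 - l` and the single choice `S = Ā⁻¹ B̄` that is
optimal for the averaged pair, gives joint convexity (`posSemidef_jensen_inv`).

Joint concavity of the harmonic mean follows from the identity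
`(A⁻¹ + B⁻¹)⁻¹ = A - A (A + B)⁻¹ A` (`harmonic_eq`): a linear term minus the convex function
above evaluated at the pair `(A + B, A)`.
-/

theorem posSemidef_inv_sub_affine {n : ℕ} {A B : Matrix (Fin n) (Fin n) ℂ}
    (hA : A.PosDef) (hB : B.IsHermitian) (S : Matrix (Fin n) (Fin n) ℂ) :
    (B * A⁻¹ * B - (B * S + Sᴴ * B - Sᴴ * A * S)).PosSemidef := by
  have hu : IsUnit A.det := (Matrix.isUnit_iff_isUnit_det A).mp hA.isUnit
  have h := hA.inv.posSemidef.conjTranspose_mul_mul_same (B - A * S)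
  rw [conjTranspose_sub, conjTranspose_mul, hB.eq, hA.isHermitian.eq] at h
  have h1 : Sᴴ * A * A⁻¹ = Sᴴ := Matrix.mul_nonsing_inv_cancel_right _ _ hu
  have h2 : B * A⁻¹ * (A * S) = B * S := by
    rw [← Matrix.mul_assoc, Matrix.nonsing_inv_mul_cancel_right _ _ hu]
  rw [Matrix.sub_mul, h1, Matrix.sub_mul, Matrix.mul_sub, Matrix.mul_sub, h2,
    ← Matrix.mul_assoc Sᴴ] at h
  have e : B * A⁻¹ * B - (B * S + Sᴴ * B - Sᴴ * A * S) =
      B * A⁻¹ * B - B * S - (Sᴴ * B - Sᴴ * A * S) := by abel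
  rw [e]
  exact h

theorem posDef_convex_comb {n : ℕ} {A₁ A₂ : Matrix (Fin n) (Fin n) ℂ}
    (hA₁ : A₁.PosDef) (hA₂ : A₂.PosDef) {l : ℝ} (hl0 : 0 ≤ l) (hl1 : l ≤ 1) :
    ((l : ℂ) • A₁ + ((1 - l : ℝ) : ℂ) • A₂).PosDef := by
  rcases hl0.eq_or_lt with rfl | h
  · simpa using hA₂
  · exact (hA₁.smul (by exact_mod_cast h)).add_posSemidef
      (hA₂.posSemidef.smul (by exact_mod_cast sub_nonneg.mpr hl1))

/-- Joint convexity of `(A, B) ↦ B A⁻¹ B` for positive definite `A` and Hermitian `B`. -/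
theorem posSemidef_jensen_inv {n : ℕ} {A₁ A₂ B₁ B₂ : Matrix (Fin n) (Fin n) ℂ}
    (hA₁ : A₁.PosDef) (hA₂ : A₂.PosDef) (hB₁ : B₁.IsHermitian) (hB₂ : B₂.IsHermitian)
    {l : ℝ} (hl0 : 0 ≤ l) (hl1 : l ≤ 1) :
    (((l : ℂ) • (B₁ * A₁⁻¹ * B₁) + ((1 - l : ℝ) : ℂ) • (B₂ * A₂⁻¹ * B₂)) -
      ((l : ℂ) • B₁ + ((1 - l : ℝ) : ℂ) • B₂) *
        ((l : ℂ) • A₁ + ((1 - l : ℝ) : ℂ) • A₂)⁻¹ *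
        ((l : ℂ) • B₁ + ((1 - l : ℝ) : ℂ) • B₂)).PosSemidef := by
  have hA := posDef_convex_comb hA₁ hA₂ hl0 hl1
  have hc0 : (0 : ℂ) ≤ (l : ℂ) := by exact_mod_cast hl0
  have hc1 : (0 : ℂ) ≤ ((1 - l : ℝ) : ℂ) := by exact_mod_cast sub_nonneg.mpr hl1
  generalize (l : ℂ) = c at *
  generalize ((1 - l : ℝ) : ℂ) = d at *
  have hu := (Matrix.isUnit_iff_isUnit_det _).mp hA.isUnit
  set A := c • A₁ + d • A₂ with hAdef
  set B := c • B₁ + d • B₂ with hBdef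
  set S := A⁻¹ * B with hS
  have hAS : A * S = B := Matrix.mul_nonsing_inv_cancel_left _ _ hu
  have h := ((posSemidef_inv_sub_affine hA₁ hB₁ S).smul hc0).add
    ((posSemidef_inv_sub_affine hA₂ hB₂ S).smul hc1)
  -- The affine minorants average to their value at `(A, B)`, which is `B A⁻¹ B`.
  have key : c • (B₁ * S + Sᴴ * B₁ - Sᴴ * A₁ * S) + d • (B₂ * S + Sᴴ * B₂ - Sᴴ * A₂ * S)
      = B * A⁻¹ * B := by
    calc _ = B * S + Sᴴ * B - Sᴴ * (A * S) := by
          rw [hBdef, hAdef]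
          simp only [Matrix.add_mul, Matrix.mul_add, Matrix.smul_mul, Matrix.mul_smul,
            smul_add, smul_sub, Matrix.mul_assoc]
          abel
      _ = B * A⁻¹ * B := by rw [hAS, add_sub_cancel_right, hS, Matrix.mul_assoc]
  rw [← key]
  convert h using 1
  simp only [smul_sub]
  abel

theorem harmonic_eq {n : ℕ} {A B : Matrix (Fin n) (Fin n) ℂ} (hA : A.PosDef) (hB : B.PosDef) :
    (A⁻¹ + B⁻¹)⁻¹ = A - A * (A + B)⁻¹ * A := by
  have hu := (Matrix.isUnit_iff_isUnit_det _).mp hA.isUnit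
  have hv := (Matrix.isUnit_iff_isUnit_det _).mp hB.isUnit
  have hw := (Matrix.isUnit_iff_isUnit_det _).mp (hA.add hB).isUnit
  apply Matrix.inv_eq_left_inv
  have h1 : A⁻¹ + B⁻¹ = A⁻¹ * ((A + B) * B⁻¹) := by
    rw [Matrix.add_mul, Matrix.mul_nonsing_inv _ hv, Matrix.mul_add,
      Matrix.nonsing_inv_mul_cancel_left _ _ hu, Matrix.mul_one, add_comm]
  rw [h1, Matrix.sub_mul, Matrix.mul_nonsing_inv_cancel_left _ _ hu, Matrix.mul_assoc _ A,
    Matrix.mul_nonsing_inv_cancel_left _ _ hu, Matrix.mul_assoc A,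
    Matrix.nonsing_inv_mul_cancel_left _ _ hw, ← Matrix.sub_mul, add_sub_cancel_left,
    Matrix.mul_nonsing_inv _ hv]

/-- **Joint convexity of `(A,B) ↦ B A⁻¹ B` and joint concavity of the matrix harmonic
mean `(A,B) ↦ (A⁻¹ + B⁻¹)⁻¹`** for positive definite matrices, in the Loewner order. -/
theorem jointly_convex_inv_and_harmonic_mean {n : ℕ}
    (A₁ A₂ B₁ B₂ : Matrix (Fin n) (Fin n) ℂ)
    (hA₁ : A₁.PosDef) (hA₂ : A₂.PosDef) (hB₁ : B₁.PosDef) (hB₂ : B₂.PosDef)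
    (l : ℝ) (hl0 : 0 ≤ l) (hl1 : l ≤ 1) :
    (((l : ℂ) • (B₁ * A₁⁻¹ * B₁) + ((1 - l : ℝ) : ℂ) • (B₂ * A₂⁻¹ * B₂)) -
      ((l : ℂ) • B₁ + ((1 - l : ℝ) : ℂ) • B₂) *
        ((l : ℂ) • A₁ + ((1 - l : ℝ) : ℂ) • A₂)⁻¹ *
        ((l : ℂ) • B₁ + ((1 - l : ℝ) : ℂ) • B₂)).PosSemidef ∧
    ((((l : ℂ) • A₁ + ((1 - l : ℝ) : ℂ) • A₂)⁻¹ +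
        ((l : ℂ) • B₁ + ((1 - l : ℝ) : ℂ) • B₂)⁻¹)⁻¹ -
      (l : ℂ) • (A₁⁻¹ + B₁⁻¹)⁻¹ - ((1 - l : ℝ) : ℂ) • (A₂⁻¹ + B₂⁻¹)⁻¹).PosSemidef := by
  refine ⟨posSemidef_jensen_inv hA₁ hA₂ hB₁.isHermitian hB₂.isHermitian hl0 hl1, ?_⟩
  rw [harmonic_eq (posDef_convex_comb hA₁ hA₂ hl0 hl1) (posDef_convex_comb hB₁ hB₂ hl0 hl1),
    harmonic_eq hA₁ hB₁, harmonic_eq hA₂ hB₂]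
  have h := posSemidef_jensen_inv (hA₁.add hB₁) (hA₂.add hB₂) hA₁.isHermitian hA₂.isHermitian
    hl0 hl1
  rw [smul_add, smul_add, add_add_add_comm] at h
  convert h using 1
  simp only [smul_sub]
  abel
end

section
/- Lieb–Ando theorem: let A₁, A₂ be n×n and B₁, B₂ be m×m positive definite complex matrices, λ ∈ [0,1], Ā = λ·A₁ + (1−λ)·A₂ and B̄ = λ·B₁ + (1−λ)·B₂. If α ∈ (0,1), then Ā^α ⊗ B̄^{1−α} − λ·(A₁^α ⊗ B₁^{1−α}) − (1−λ)·(A₂^α ⊗ B₂^{1−α}) is positive semidefinite (joint concavity of (A,B) ↦ A^α ⊗ B^{1−α}). If α ∈ (−1,0) ∪ (1,2), then the negative of this matrix is positive semidefinite (joint convexity). -/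
/-!
`A ⊗ 1` and `1 ⊗ B` commute, so `A ^ α ⊗ B ^ (1 - α)` is the joint functional calculus
`f(A ⊗ 1, 1 ⊗ B)` of the scalar function `f(x, y) = x ^ α * y ^ (1 - α)`, and its quadratic form
is a nonnegative combination of values of `f` at pairs of eigenvalues (`jfc_dotProduct`).

Up to positive factors, each such `f` (or `-f` when `0 < α < 1`) is an integral over `t > 0` of
kernels `a x + b y + c x² / (x + t y)` with `c ≥ 0`: write `f(x, y) = y (x / y) ^ α`, or
`x (y / x) ^ (1 - α)` for `α < 0`, and use the integral representation of `z ^ p` for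
`0 < p < 1` or `1 < p < 2`. The part linear in `(x, y)` contributes terms affine in `(A, B)`, and
`x² / (x + t y)` becomes `X (X + tY)⁻¹ X` with `X = A ⊗ 1` and `Y = 1 ⊗ B`, which is jointly convex
by completing a square (`jconvexAt_kernel`). Testing against vectors turns the operator inequality
into scalar ones, which integrate (`jconvexAt_integral`).
-/

open Matrix
open scoped ComplexOrder Kronecker

/-! ### Joint functional calculus of `A ⊗ 1` and `1 ⊗ B` -/

/-- The joint functional calculus `f(A ⊗ 1, 1 ⊗ B)` of the commuting Hermitian matrices `A ⊗ 1`
and `1 ⊗ B`, computed in the product of the eigenbases of `A` and `B`. -/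
noncomputable def jfc {n m : ℕ} {A : Matrix (Fin n) (Fin n) ℂ} {B : Matrix (Fin m) (Fin m) ℂ}
    (hA : A.IsHermitian) (hB : B.IsHermitian) (f : ℝ → ℝ → ℝ) :
    Matrix (Fin n × Fin m) (Fin n × Fin m) ℂ :=
  ((hA.eigenvectorUnitary : Matrix (Fin n) (Fin n) ℂ) ⊗ₖ
      (hB.eigenvectorUnitary : Matrix (Fin m) (Fin m) ℂ)) *
    diagonal (fun p => (f (hA.eigenvalues p.1) (hB.eigenvalues p.2) : ℂ)) *
    ((hA.eigenvectorUnitary : Matrix (Fin n) (Fin n) ℂ) ⊗ₖ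
      (hB.eigenvectorUnitary : Matrix (Fin m) (Fin m) ℂ))ᴴ

/-- The quadratic form of `jfc hA hB f` at `v`: the values of `f` at pairs of eigenvalues, weighted
by the squared moduli of the coordinates of `v` in the product eigenbasis. It is real and linear
in `f`, so it commutes with integrals of scalar functions. -/
noncomputable def jq {n m : ℕ} {A : Matrix (Fin n) (Fin n) ℂ} {B : Matrix (Fin m) (Fin m) ℂ}
    (hA : A.IsHermitian) (hB : B.IsHermitian) (f : ℝ → ℝ → ℝ) (v : Fin n × Fin m → ℂ) : ℝ :=
  ∑ p, f (hA.eigenvalues p.1) (hB.eigenvalues p.2) *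
    Complex.normSq ((((hA.eigenvectorUnitary : Matrix (Fin n) (Fin n) ℂ) ⊗ₖ
      (hB.eigenvectorUnitary : Matrix (Fin m) (Fin m) ℂ))ᴴ *ᵥ v) p)

section Calculus

variable {n m : ℕ} {A : Matrix (Fin n) (Fin n) ℂ} {B : Matrix (Fin m) (Fin m) ℂ}

lemma eigen_kron_unitary (hA : A.IsHermitian) (hB : B.IsHermitian) :
    ((hA.eigenvectorUnitary : Matrix (Fin n) (Fin n) ℂ) ⊗ₖ
      (hB.eigenvectorUnitary : Matrix (Fin m) (Fin m) ℂ))ᴴ *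
    ((hA.eigenvectorUnitary : Matrix (Fin n) (Fin n) ℂ) ⊗ₖ
      (hB.eigenvectorUnitary : Matrix (Fin m) (Fin m) ℂ)) = 1 := by
  rw [conjTranspose_kronecker, ← mul_kronecker_mul, ← star_eq_conjTranspose,
    ← star_eq_conjTranspose, Unitary.coe_star_mul_self, Unitary.coe_star_mul_self,
    one_kronecker_one]

lemma jfc_mul (hA : A.IsHermitian) (hB : B.IsHermitian) (f g : ℝ → ℝ → ℝ) :
    jfc hA hB f * jfc hA hB g = jfc hA hB (fun x y => f x y * g x y) := by
  have h := eigen_kron_unitary hA hB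
  unfold jfc
  set W := ((hA.eigenvectorUnitary : Matrix (Fin n) (Fin n) ℂ) ⊗ₖ
      (hB.eigenvectorUnitary : Matrix (Fin m) (Fin m) ℂ))
  rw [show ∀ D E : Matrix (Fin n × Fin m) (Fin n × Fin m) ℂ,
      W * D * Wᴴ * (W * E * Wᴴ) = W * D * (Wᴴ * W) * E * Wᴴ from fun D E => by noncomm_ring,
    h, mul_one, mul_assoc W, diagonal_mul_diagonal]
  simp

lemma jfc_add (hA : A.IsHermitian) (hB : B.IsHermitian) (f g : ℝ → ℝ → ℝ) :
    jfc hA hB f + jfc hA hB g = jfc hA hB (fun x y => f x y + g x y) := by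
  simp only [jfc, ← Matrix.add_mul, ← Matrix.mul_add, diagonal_add, Complex.ofReal_add]

lemma jfc_smul (hA : A.IsHermitian) (hB : B.IsHermitian) (c : ℝ) (f : ℝ → ℝ → ℝ) :
    (c : ℂ) • jfc hA hB f = jfc hA hB (fun x y => c * f x y) := by
  have h : diagonal (fun p : Fin n × Fin m =>
      ((c * f (hA.eigenvalues p.1) (hB.eigenvalues p.2) : ℝ) : ℂ))
      = (c : ℂ) • diagonal (fun p => (f (hA.eigenvalues p.1) (hB.eigenvalues p.2) : ℂ)) := by
    rw [← diagonal_smul]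
    congr 1
    ext p
    simp
  rw [jfc, jfc, h, Matrix.mul_smul, Matrix.smul_mul]

lemma jfc_isHermitian (hA : A.IsHermitian) (hB : B.IsHermitian) (f : ℝ → ℝ → ℝ) :
    (jfc hA hB f).IsHermitian := by
  unfold jfc
  apply isHermitian_mul_mul_conjTranspose
  rw [IsHermitian, diagonal_conjTranspose]
  congr 1
  ext p
  simp

lemma jfc_dotProduct (hA : A.IsHermitian) (hB : B.IsHermitian) (f : ℝ → ℝ → ℝ)
    (v : Fin n × Fin m → ℂ) : star v ⬝ᵥ (jfc hA hB f *ᵥ v) = (jq hA hB f v : ℂ) := by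
  unfold jfc jq
  set W := ((hA.eigenvectorUnitary : Matrix (Fin n) (Fin n) ℂ) ⊗ₖ
      (hB.eigenvectorUnitary : Matrix (Fin m) (Fin m) ℂ))
  rw [← mulVec_mulVec, ← mulVec_mulVec, dotProduct_mulVec,
    show star v ᵥ* W = star (Wᴴ *ᵥ v) by rw [star_mulVec, conjTranspose_conjTranspose]]
  simp only [dotProduct, mulVec_diagonal, Complex.ofReal_sum, Complex.ofReal_mul,
    Complex.normSq_eq_conj_mul_self, Pi.star_apply, RCLike.star_def]
  exact Finset.sum_congr rfl fun p _ => by ring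

lemma jfc_posSemidef (hA : A.PosDef) (hB : B.PosDef) {f : ℝ → ℝ → ℝ}
    (hf : ∀ x y, 0 < x → 0 < y → 0 ≤ f x y) : (jfc hA.1 hB.1 f).PosSemidef := by
  refine .of_dotProduct_mulVec_nonneg (jfc_isHermitian _ _ _) fun v => ?_
  rw [jfc_dotProduct]
  exact_mod_cast Finset.sum_nonneg fun p _ => mul_nonneg
    (hf _ _ (hA.eigenvalues_pos _) (hB.eigenvalues_pos _)) (Complex.normSq_nonneg _)

lemma jfc_congr (hA : A.PosDef) (hB : B.PosDef) {f g : ℝ → ℝ → ℝ}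
    (h : ∀ x y, 0 < x → 0 < y → f x y = g x y) : jfc hA.1 hB.1 f = jfc hA.1 hB.1 g := by
  unfold jfc
  congr 3
  ext p
  rw [h _ _ (hA.eigenvalues_pos _) (hB.eigenvalues_pos _)]

lemma jfc_kronecker (hA : A.IsHermitian) (hB : B.IsHermitian) (f g : ℝ → ℝ) :
    hA.cfc f ⊗ₖ hB.cfc g = jfc hA hB (fun x y => f x * g y) := by
  simp only [IsHermitian.cfc, Unitary.conjStarAlgAut_apply, jfc, mul_kronecker_mul,
    diagonal_kronecker_diagonal, conjTranspose_kronecker, star_eq_conjTranspose]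
  simp

lemma cfc_one_eq (hA : A.IsHermitian) : hA.cfc (fun _ => 1) = 1 := by
  have : (RCLike.ofReal ∘ (fun _ => (1 : ℝ)) ∘ hA.eigenvalues : Fin n → ℂ) = fun _ => 1 := by
    ext; simp
  rw [IsHermitian.cfc, this, diagonal_one, map_one]

lemma jfc_fst (hA : A.IsHermitian) (hB : B.IsHermitian) :
    jfc hA hB (fun x _ => x) = A ⊗ₖ (1 : Matrix (Fin m) (Fin m) ℂ) := by
  have h : hA.cfc (fun x => x) = A := hA.spectral_theorem.symm
  simpa [h, cfc_one_eq] using (jfc_kronecker hA hB (fun x => x) (fun _ => 1)).symm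

lemma jfc_snd (hA : A.IsHermitian) (hB : B.IsHermitian) :
    jfc hA hB (fun _ y => y) = (1 : Matrix (Fin n) (Fin n) ℂ) ⊗ₖ B := by
  have h : hB.cfc (fun x => x) = B := hB.spectral_theorem.symm
  simpa [h, cfc_one_eq] using (jfc_kronecker hA hB (fun _ => 1) (fun x => x)).symm

lemma mpow_kronecker (hA : A.IsHermitian) (hB : B.IsHermitian) (a b : ℝ) :
    mpow A a ⊗ₖ mpow B b = jfc hA hB (fun x y => x ^ a * y ^ b) := by
  rw [mpow, mpow, dif_pos hA, dif_pos hB, jfc_kronecker]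

end Calculus

/-! ### Joint convexity of kernels and of their integrals -/

/-- Joint operator convexity of `f` on a segment: the convexity inequality for
`(A, B) ↦ f(A ⊗ 1, 1 ⊗ B)` between `(A₁, B₁)` and `(A₂, B₂)`, tested on every vector. -/
def JConvexAt {n m : ℕ} {A₁ A₂ A : Matrix (Fin n) (Fin n) ℂ} {B₁ B₂ B : Matrix (Fin m) (Fin m) ℂ}
    (hA₁ : A₁.PosDef) (hA₂ : A₂.PosDef) (hA : A.PosDef)
    (hB₁ : B₁.PosDef) (hB₂ : B₂.PosDef) (hB : B.PosDef) (l : ℝ) (f : ℝ → ℝ → ℝ) : Prop :=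
  ∀ v, jq hA.1 hB.1 f v ≤ l * jq hA₁.1 hB₁.1 f v + (1 - l) * jq hA₂.1 hB₂.1 f v

section Convexity

variable {n m : ℕ} {A₁ A₂ A : Matrix (Fin n) (Fin n) ℂ} {B₁ B₂ B : Matrix (Fin m) (Fin m) ℂ}
  (hA₁ : A₁.PosDef) (hA₂ : A₂.PosDef) (hA : A.PosDef)
  (hB₁ : B₁.PosDef) (hB₂ : B₂.PosDef) (hB : B.PosDef) {l : ℝ}

lemma jconvexAt_iff {f : ℝ → ℝ → ℝ} :
    JConvexAt hA₁ hA₂ hA hB₁ hB₂ hB l f ↔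
      ((l : ℂ) • jfc hA₁.1 hB₁.1 f + ((1 - l : ℝ) : ℂ) • jfc hA₂.1 hB₂.1 f
        - jfc hA.1 hB.1 f).PosSemidef := by
  have key : ∀ v, star v ⬝ᵥ (((l : ℂ) • jfc hA₁.1 hB₁.1 f
      + ((1 - l : ℝ) : ℂ) • jfc hA₂.1 hB₂.1 f - jfc hA.1 hB.1 f) *ᵥ v)
      = ((l * jq hA₁.1 hB₁.1 f v + (1 - l) * jq hA₂.1 hB₂.1 f v - jq hA.1 hB.1 f v : ℝ) : ℂ) := by
    intro v
    simp [sub_mulVec, add_mulVec, smul_mulVec, dotProduct_add, dotProduct_sub, dotProduct_smul,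
      jfc_dotProduct]
  rw [posSemidef_iff_dotProduct_mulVec]
  simp only [key, Complex.zero_le_real, sub_nonneg]
  refine ⟨fun h => ⟨?_, h⟩, fun h => h.2⟩
  rw [jfc_smul, jfc_smul]
  exact ((jfc_isHermitian _ _ _).add (jfc_isHermitian _ _ _)).sub (jfc_isHermitian _ _ _)

/-- Joint convexity of the kernel `X (X + tY)⁻¹ X` with `X = A ⊗ 1` and `Y = 1 ⊗ B`, together with
arbitrary linear terms. With `M = X + tY` and `R = M⁻¹ X`, completing the square gives
`X M⁻¹ X = X K + K X - K M K + (R - K) M (R - K)` for every Hermitian `K`. The first three terms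
are linear in `(A, B)`, and the last one is positive semidefinite and vanishes at `K = R`. Taking
for `K` the matrix `R` of the convex combination exhibits the convexity defect as a sum of
positive semidefinite terms. -/
lemma jconvexAt_kernel (hl0 : 0 ≤ l) (hl1 : l ≤ 1)
    (hAe : A = (l : ℂ) • A₁ + ((1 - l : ℝ) : ℂ) • A₂)
    (hBe : B = (l : ℂ) • B₁ + ((1 - l : ℝ) : ℂ) • B₂)
    {t : ℝ} (ht : 0 < t) (a b c : ℝ) (hc : 0 ≤ c) :
    JConvexAt hA₁ hA₂ hA hB₁ hB₂ hB l
      (fun x y => a * x + b * y + c * (x ^ 2 / (x + t * y))) := by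
  rw [jconvexAt_iff]
  simp only [← jfc_add, ← jfc_smul]
  -- `M R = X`, `R M = X`, `X M⁻¹ X = X R` and `M = X + tY`, for `R` given by `x / (x + t y)`.
  have hrel : ∀ {A : Matrix (Fin n) (Fin n) ℂ} {B : Matrix (Fin m) (Fin m) ℂ}
      (hA : A.PosDef) (hB : B.PosDef),
      jfc hA.1 hB.1 (fun x y => x + t * y) * jfc hA.1 hB.1 (fun x y => x / (x + t * y))
        = A ⊗ₖ 1 ∧
      jfc hA.1 hB.1 (fun x y => x / (x + t * y)) * jfc hA.1 hB.1 (fun x y => x + t * y)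
        = A ⊗ₖ 1 ∧
      jfc hA.1 hB.1 (fun x y => x ^ 2 / (x + t * y)) =
        A ⊗ₖ 1 * jfc hA.1 hB.1 (fun x y => x / (x + t * y)) ∧
      jfc hA.1 hB.1 (fun x y => x + t * y) = A ⊗ₖ 1 + (t : ℂ) • (1 ⊗ₖ B) := by
    intro A B hA hB
    rw [← jfc_fst hA.1 hB.1, ← jfc_snd hA.1 hB.1, jfc_smul, jfc_add, jfc_mul, jfc_mul, jfc_mul]
    refine ⟨?_, ?_, ?_, rfl⟩ <;> refine jfc_congr hA hB fun x y hx hy => ?_ <;>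
      · have : x + t * y ≠ 0 := by positivity
        field_simp
  -- `(R - K) M (R - K)`, expanded, is positive semidefinite.
  have hM : ∀ {A : Matrix (Fin n) (Fin n) ℂ} {B : Matrix (Fin m) (Fin m) ℂ}
      (hA : A.PosDef) (hB : B.PosDef) (K : Matrix (Fin n × Fin m) (Fin n × Fin m) ℂ),
      K.IsHermitian → (jfc hA.1 hB.1 (fun x y => x ^ 2 / (x + t * y)) - A ⊗ₖ 1 * K - K * A ⊗ₖ 1
        + K * (A ⊗ₖ 1 + (t : ℂ) • (1 ⊗ₖ B)) * K).PosSemidef := by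
    intro A B hA hB K hK
    obtain ⟨h1, h2, h3, h4⟩ := hrel hA hB
    have hp : (jfc hA.1 hB.1 (fun x y => x + t * y)).PosSemidef :=
      jfc_posSemidef hA hB fun x y hx hy => by positivity
    have hR := jfc_isHermitian hA.1 hB.1 (fun x y => x / (x + t * y))
    have := hp.conjTranspose_mul_mul_same (jfc hA.1 hB.1 (fun x y => x / (x + t * y)) - K)
    rw [(hR.sub hK).eq] at this
    convert this using 1
    rw [h3, ← h4]
    generalize jfc hA.1 hB.1 (fun x y => x / (x + t * y)) = R at *
    generalize jfc hA.1 hB.1 (fun x y => x + t * y) = M at *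
    have e : (R - K) * M * (R - K) = (R * M) * R - (R * M) * K - K * (M * R) + K * M * K := by
      noncomm_ring
    rw [e, h1, h2]
  obtain ⟨h1, h2, h3, h4⟩ := hrel hA hB
  have hK := jfc_isHermitian hA.1 hB.1 (fun x y => x / (x + t * y))
  have hl : (0 : ℂ) ≤ l := by exact_mod_cast hl0
  have hl' : (0 : ℂ) ≤ ((1 - l : ℝ) : ℂ) := by exact_mod_cast sub_nonneg.2 hl1
  have hc' : (0 : ℂ) ≤ c := by exact_mod_cast hc
  have main := ((((hM hA₁ hB₁ _ hK).smul hl).add ((hM hA₂ hB₂ _ hK).smul hl'))).smul hc'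
  convert main using 1
  rw [h3, jfc_fst, jfc_fst, jfc_fst, jfc_snd, jfc_snd, jfc_snd]
  rw [h4] at h2
  set K := jfc hA.1 hB.1 (fun x y => x / (x + t * y))
  have hX : A ⊗ₖ (1 : Matrix (Fin m) (Fin m) ℂ)
      = (l : ℂ) • A₁ ⊗ₖ 1 + ((1 - l : ℝ) : ℂ) • A₂ ⊗ₖ 1 := by
    rw [hAe, add_kronecker, smul_kronecker, smul_kronecker]
  have hY : (1 : Matrix (Fin n) (Fin n) ℂ) ⊗ₖ B
      = (l : ℂ) • 1 ⊗ₖ B₁ + ((1 - l : ℝ) : ℂ) • 1 ⊗ₖ B₂ := by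
    rw [hBe, kronecker_add, kronecker_smul, kronecker_smul]
  have h5 : K * (A ⊗ₖ 1 + (t : ℂ) • (1 ⊗ₖ B)) * K = A ⊗ₖ 1 * K := by rw [h2]
  have h6 : K * A ⊗ₖ 1 = A ⊗ₖ 1 * K := by
    rw [← h5, Matrix.mul_assoc, ← h4, h1]
  rw [hX, hY] at h5
  rw [hX] at h6
  rw [hX, hY]
  generalize A₁ ⊗ₖ (1 : Matrix (Fin m) (Fin m) ℂ) = X₁ at *
  generalize A₂ ⊗ₖ (1 : Matrix (Fin m) (Fin m) ℂ) = X₂ at *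
  generalize (1 : Matrix (Fin n) (Fin n) ℂ) ⊗ₖ B₁ = Y₁ at *
  generalize (1 : Matrix (Fin n) (Fin n) ℂ) ⊗ₖ B₂ = Y₂ at *
  simp only [Matrix.add_mul, Matrix.mul_add, Matrix.smul_mul, Matrix.mul_smul, smul_add, smul_sub,
    smul_smul] at h5 h6 ⊢
  linear_combination (norm := module) (c : ℂ) • h6 - (c : ℂ) • h5

/-- Joint convexity passes to integrals of kernels, since `jq` is linear in the function. -/
lemma jconvexAt_integral (μ : MeasureTheory.Measure ℝ) {f : ℝ → ℝ → ℝ} {k : ℝ → ℝ → ℝ → ℝ}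
    (hf : ∀ x y, 0 < x → 0 < y →
      MeasureTheory.IntegrableOn (fun t => k t x y) (Set.Ioi 0) μ ∧
      f x y = ∫ t in Set.Ioi 0, k t x y ∂μ)
    (hk : ∀ t, 0 < t → JConvexAt hA₁ hA₂ hA hB₁ hB₂ hB l (k t)) :
    JConvexAt hA₁ hA₂ hA hB₁ hB₂ hB l f := by
  have key : ∀ {A : Matrix (Fin n) (Fin n) ℂ} {B : Matrix (Fin m) (Fin m) ℂ}
      (hA : A.PosDef) (hB : B.PosDef) (v : Fin n × Fin m → ℂ),
      MeasureTheory.IntegrableOn (fun t => jq hA.1 hB.1 (k t) v) (Set.Ioi 0) μ ∧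
      jq hA.1 hB.1 f v = ∫ t in Set.Ioi 0, jq hA.1 hB.1 (k t) v ∂μ := by
    intro A B hA hB v
    have hi : ∀ p : Fin n × Fin m, _ :=
      fun p => hf _ _ (hA.eigenvalues_pos p.1) (hB.eigenvalues_pos p.2)
    unfold jq
    refine ⟨MeasureTheory.integrable_finsetSum _ fun p _ => (hi p).1.mul_const _, ?_⟩
    rw [MeasureTheory.integral_finsetSum _ fun p _ => (hi p).1.mul_const _]
    exact Finset.sum_congr rfl fun p _ => by
      rw [MeasureTheory.integral_mul_const, (hi p).2]
  intro v
  obtain ⟨i, e⟩ := key hA hB v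
  obtain ⟨i₁, e₁⟩ := key hA₁ hB₁ v
  obtain ⟨i₂, e₂⟩ := key hA₂ hB₂ v
  rw [e, e₁, e₂, ← MeasureTheory.integral_const_mul, ← MeasureTheory.integral_const_mul,
    ← MeasureTheory.integral_add (i₁.const_mul _) (i₂.const_mul _)]
  exact MeasureTheory.setIntegral_mono_on i ((i₁.const_mul _).add (i₂.const_mul _))
    measurableSet_Ioi fun t ht => hk t ht v

lemma jconvexAt_congr {f g : ℝ → ℝ → ℝ} (h : ∀ x y, 0 < x → 0 < y → f x y = g x y)
    (hg : JConvexAt hA₁ hA₂ hA hB₁ hB₂ hB l g) : JConvexAt hA₁ hA₂ hA hB₁ hB₂ hB l f := by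
  rw [jconvexAt_iff] at hg ⊢
  rwa [jfc_congr hA hB h, jfc_congr hA₁ hB₁ h, jfc_congr hA₂ hB₂ h]

lemma jconvexAt_neg_iff {f : ℝ → ℝ → ℝ} :
    JConvexAt hA₁ hA₂ hA hB₁ hB₂ hB l (fun x y => - f x y) ↔
      (jfc hA.1 hB.1 f - (l : ℂ) • jfc hA₁.1 hB₁.1 f
        - ((1 - l : ℝ) : ℂ) • jfc hA₂.1 hB₂.1 f).PosSemidef := by
  have h : ∀ {A : Matrix (Fin n) (Fin n) ℂ} {B : Matrix (Fin m) (Fin m) ℂ}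
      (hA : A.PosDef) (hB : B.PosDef),
      jfc hA.1 hB.1 (fun x y => - f x y) = - jfc hA.1 hB.1 f := by
    intro A B hA hB
    simpa using (jfc_smul hA.1 hB.1 (-1) f).symm
  rw [jconvexAt_iff, h hA hB, h hA₁ hB₁, h hA₂ hB₂]
  congr! 1
  module

end Convexity

/-! ### The power functions -/

lemma rpow_mul_rpow_one_sub {x y : ℝ} (hx : 0 < x) (hy : 0 < y) (p : ℝ) :
    x ^ p * y ^ (1 - p) = y * (x / y) ^ p := by
  rw [Real.div_rpow hx.le hy.le, Real.rpow_sub hy, Real.rpow_one]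
  ring

/-- **Lieb–Ando theorem**: for positive definite matrices, the map
`(A,B) ↦ A^α ⊗ B^(1-α)` is jointly concave for `α ∈ (0,1)` and jointly convex for
`α ∈ (-1,0) ∪ (1,2)`, in the Loewner order. -/
theorem lieb_ando {n m : ℕ}
    (A₁ A₂ : Matrix (Fin n) (Fin n) ℂ) (B₁ B₂ : Matrix (Fin m) (Fin m) ℂ)
    (hA₁ : A₁.PosDef) (hA₂ : A₂.PosDef) (hB₁ : B₁.PosDef) (hB₂ : B₂.PosDef)
    (l : ℝ) (hl0 : 0 ≤ l) (hl1 : l ≤ 1) (α : ℝ) :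
    (0 < α → α < 1 →
      (mpow ((l : ℂ) • A₁ + ((1 - l : ℝ) : ℂ) • A₂) α ⊗ₖ
          mpow ((l : ℂ) • B₁ + ((1 - l : ℝ) : ℂ) • B₂) (1 - α) -
        (l : ℂ) • (mpow A₁ α ⊗ₖ mpow B₁ (1 - α)) -
        ((1 - l : ℝ) : ℂ) • (mpow A₂ α ⊗ₖ mpow B₂ (1 - α))).PosSemidef) ∧
    ((-1 < α ∧ α < 0) ∨ (1 < α ∧ α < 2) →
      ((l : ℂ) • (mpow A₁ α ⊗ₖ mpow B₁ (1 - α)) +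
        ((1 - l : ℝ) : ℂ) • (mpow A₂ α ⊗ₖ mpow B₂ (1 - α)) -
        mpow ((l : ℂ) • A₁ + ((1 - l : ℝ) : ℂ) • A₂) α ⊗ₖ
          mpow ((l : ℂ) • B₁ + ((1 - l : ℝ) : ℂ) • B₂) (1 - α)).PosSemidef) := by
  have comb : ∀ {k : ℕ} {M N : Matrix (Fin k) (Fin k) ℂ}, M.PosDef → N.PosDef →
      ((l : ℂ) • M + ((1 - l : ℝ) : ℂ) • N).PosDef := by
    intro k M N hM hN
    rcases hl0.eq_or_lt with rfl | h
    · simpa using hN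
    · have h1 : (0 : ℂ) < l := by exact_mod_cast h
      have h2 : (0 : ℂ) ≤ ((1 - l : ℝ) : ℂ) := by exact_mod_cast sub_nonneg.2 hl1
      exact (hM.smul h1).add_posSemidef (hN.posSemidef.smul h2)
  have hA := comb hA₁ hA₂
  have hB := comb hB₁ hB₂
  have hker {t : ℝ} (ht : 0 < t) (a b c : ℝ) (hc : 0 ≤ c) :=
    jconvexAt_kernel hA₁ hA₂ hA hB₁ hB₂ hB hl0 hl1 rfl rfl ht a b c hc
  rw [mpow_kronecker hA.1 hB.1, mpow_kronecker hA₁.1 hB₁.1, mpow_kronecker hA₂.1 hB₂.1,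
    ← jconvexAt_neg_iff hA₁ hA₂ hA hB₁ hB₂ hB, ← jconvexAt_iff hA₁ hA₂ hA hB₁ hB₂ hB]
  refine ⟨fun h0 h1 => ?_, ?_⟩
  · obtain ⟨μ, hμ⟩ := Real.exists_measure_rpow_eq_integral_rpowIntegrand₀₁ (p := α) ⟨h0, h1⟩
    refine jconvexAt_integral _ _ _ _ _ _ μ
      (k := fun t x y => - (y * Real.rpowIntegrand₀₁ α t (x / y))) (fun x y hx hy => ?_)
      fun t ht => ?_
    · obtain ⟨hi, he⟩ := hμ (x / y) (div_pos hx hy).le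
      refine ⟨(hi.const_mul y).neg, ?_⟩
      rw [MeasureTheory.integral_neg, MeasureTheory.integral_const_mul, ← he,
        rpow_mul_rpow_one_sub hx hy]
    -- `y * rpowIntegrand₀₁ α t (x / y) = t ^ (α - 2) * (x - x² / (x + t y))`
    · refine jconvexAt_congr _ _ _ _ _ _ (fun x y hx hy => ?_)
        (hker ht (-(t ^ α / t ^ 2)) 0 (t ^ α / t ^ 2) (by positivity))
      unfold Real.rpowIntegrand₀₁
      field_simp
      ring
  rintro (⟨h0, h1⟩ | ⟨h0, h1⟩)
  -- For `α < 0` the roles of `x` and `y` are exchanged, and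
  -- `y² / (y + t x) = y - t x + t x² / (x + t⁻¹ y)` leads back to the same kernel.
  · obtain ⟨μ, hμ⟩ := Real.exists_measure_rpow_eq_integral_rpowIntegrand₁₂ (p := 1 - α)
      ⟨by linarith, by linarith⟩
    refine jconvexAt_integral _ _ _ _ _ _ μ
      (k := fun t x y => x * Real.rpowIntegrand₁₂ (1 - α) t (y / x)) (fun x y hx hy => ?_)
      fun t ht => ?_
    · obtain ⟨hi, he⟩ := hμ (y / x) (div_pos hy hx).le
      refine ⟨hi.const_mul x, ?_⟩
      rw [MeasureTheory.integral_const_mul, ← he, ← rpow_mul_rpow_one_sub hy hx, sub_sub_cancel,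
        mul_comm]
    · refine jconvexAt_congr _ _ _ _ _ _ (fun x y hx hy => ?_)
        (hker (inv_pos.2 ht) (-(t ^ (1 - α - 1))) (t ^ (1 - α - 1) / t) (t ^ (1 - α - 1))
          (by positivity))
      unfold Real.rpowIntegrand₁₂
      generalize t ^ (1 - α - 1) = s
      field_simp
      ring
  · obtain ⟨μ, hμ⟩ := Real.exists_measure_rpow_eq_integral_rpowIntegrand₁₂ (p := α) ⟨h0, h1⟩
    refine jconvexAt_integral _ _ _ _ _ _ μ
      (k := fun t x y => y * Real.rpowIntegrand₁₂ α t (x / y)) (fun x y hx hy => ?_)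
      fun t ht => ?_
    · obtain ⟨hi, he⟩ := hμ (x / y) (div_pos hx hy).le
      refine ⟨hi.const_mul y, ?_⟩
      rw [MeasureTheory.integral_const_mul, ← he, rpow_mul_rpow_one_sub hx hy]
    -- `y * rpowIntegrand₁₂ α t (x / y) = t ^ (α - 2) * (x² / (x + t y))`
    · refine jconvexAt_congr _ _ _ _ _ _ (fun x y hx hy => ?_)
        (hker ht 0 0 (t ^ (α - 1) / t) (by positivity))
      unfold Real.rpowIntegrand₁₂
      generalize t ^ (α - 1) = s
      field_simp
      ring
end

section
/- Lieb's concavity theorem and Ando's convexity theorem for trace functionals: let K be an arbitrary m×n complex matrix, and for an n×n positive definite matrix M and an m×m positive definite matrix N set f(M,N) = Re tr(M^α · K† · N^{1−α} · K). If α ∈ (0,1), then f is jointly concave: for positive definite M₁, M₂, N₁, N₂ and λ ∈ [0,1], f(λM₁+(1−λ)M₂, λN₁+(1−λ)N₂) ≥ λ·f(M₁,N₁) + (1−λ)·f(M₂,N₂). If α ∈ (1,2), then the reverse inequality holds (joint convexity). -/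
/-!
Write `a i`, `b j` for the eigenvalues of `M`, `N` and `Y = V† K U` for the matrix of `K` in the
corresponding eigenbases. Then `tr (M^α K† N^(1-α) K) = ∑ a i ^ α * b j ^ (1-α) * |Y j i|²`, so the
functional is a double sum of the scalar kernel `a ^ α * b ^ (1-α)` against the weights `|Y j i|²`
(`trace_cfc_mul_cfc`).

For the kernel `a * b / (a + t * b)` with `t > 0`, the parallel sum of `a` and `t * b` divided by
`t`, completing the square shows that `t` times the double sum is the minimum over matrices `X` of
`tr (M X† X) + t * tr ((K - X)† N (K - X))` (`parallel_le`, `exists_parallel_eq`). Each of these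
expressions is linear in `(M, N)`, and a minimum of linear functions is concave
(`parallel_concave`).

The integral representation of `x ^ p` for `0 < p < 1`, applied to `x = a / b`, reduces everything
to this kernel. For `α ∈ (0, 1)`, `a ^ α * b ^ (1-α) = b * (a / b) ^ α` is an integral over `t` of
nonnegative multiples of `a * b / (a + t * b)`, which gives concavity. For `α ∈ (1, 2)`,
`a ^ α * b ^ (1-α) = a * (a / b) ^ (α-1)` is an integral of nonnegative multiples of
`a ^ 2 / (a + t * b) = a - t * (a * b / (a + t * b))`, a linear kernel minus a concave one, which
gives convexity.
-/

open Matrix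
open scoped ComplexOrder

open MeasureTheory

/-! ### Traces as double sums over eigenvalues -/

section SpectralSum

variable {n m : ℕ}

/-- The double sum `∑ g (a i) (b j) * |(V† X U) j i|²`, where `M = U diag(a) U†` and
`N = V diag(b) V†` are the spectral decompositions of `M` and `N`. -/
noncomputable def spectralSum {M : Matrix (Fin n) (Fin n) ℂ} {N : Matrix (Fin m) (Fin m) ℂ}
    (hM : M.IsHermitian) (hN : N.IsHermitian) (X : Matrix (Fin m) (Fin n) ℂ)
    (g : ℝ → ℝ → ℝ) : ℝ :=
  ∑ i, ∑ j, g (hM.eigenvalues i) (hN.eigenvalues j) *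
    Complex.normSq (((hN.eigenvectorUnitary : Matrix (Fin m) (Fin m) ℂ)ᴴ * X *
      (hM.eigenvectorUnitary : Matrix (Fin n) (Fin n) ℂ)) j i)

lemma trace_diagonal_mul_diagonal (Y : Matrix (Fin m) (Fin n) ℂ) (d : Fin n → ℝ)
    (e : Fin m → ℝ) :
    ((diagonal (fun i => (d i : ℂ)) * Yᴴ * diagonal (fun j => (e j : ℂ)) * Y).trace).re =
      ∑ i, ∑ j, d i * e j * Complex.normSq (Y j i) := by
  simp only [Matrix.trace, Matrix.diag_apply, Complex.re_sum]
  refine Finset.sum_congr rfl fun i _ => ?_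
  rw [Matrix.mul_apply, Complex.re_sum]
  refine Finset.sum_congr rfl fun j _ => ?_
  rw [Matrix.mul_diagonal, Matrix.diagonal_mul, Matrix.conjTranspose_apply]
  have : (d i : ℂ) * star (Y j i) * (e j : ℂ) * Y j i
      = ((d i * e j * Complex.normSq (Y j i) : ℝ) : ℂ) := by
    push_cast
    rw [Complex.normSq_eq_conj_mul_self, Complex.star_def]
    ring
  rw [this, Complex.ofReal_re]

lemma cfc_eq_mul {M : Matrix (Fin n) (Fin n) ℂ} (hM : M.IsHermitian) (p : ℝ → ℝ) :
    hM.cfc p = (hM.eigenvectorUnitary : Matrix (Fin n) (Fin n) ℂ) *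
      diagonal (fun i => (p (hM.eigenvalues i) : ℂ)) *
      (hM.eigenvectorUnitary : Matrix (Fin n) (Fin n) ℂ)ᴴ := by
  rw [Matrix.IsHermitian.cfc, Unitary.conjStarAlgAut_apply]
  rfl

/-- The bridge from traces of functions of `M` and `N` to double sums over eigenvalues. -/
lemma trace_cfc_mul_cfc {M : Matrix (Fin n) (Fin n) ℂ} {N : Matrix (Fin m) (Fin m) ℂ}
    (hM : M.IsHermitian) (hN : N.IsHermitian) (X : Matrix (Fin m) (Fin n) ℂ) (p q : ℝ → ℝ) :
    ((hM.cfc p * Xᴴ * hN.cfc q * X).trace).re =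
      spectralSum hM hN X (fun a b => p a * q b) := by
  rw [spectralSum, ← trace_diagonal_mul_diagonal, cfc_eq_mul, cfc_eq_mul]
  congr 1
  simp only [Matrix.conjTranspose_mul, Matrix.conjTranspose_conjTranspose, Matrix.mul_assoc]
  rw [Matrix.trace_mul_comm]
  simp only [Matrix.mul_assoc]

lemma cfc_id_eq {M : Matrix (Fin n) (Fin n) ℂ} (hM : M.IsHermitian) :
    hM.cfc (fun t => t) = M := by
  conv_rhs => rw [hM.spectral_theorem]
  rfl

lemma cfc_one_eq_s9 {M : Matrix (Fin n) (Fin n) ℂ} (hM : M.IsHermitian) :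
    hM.cfc (fun _ => 1) = 1 := by
  rw [cfc_eq_mul]
  simp [← Matrix.star_eq_conjTranspose]

lemma spectralSum_left {M : Matrix (Fin n) (Fin n) ℂ} {N : Matrix (Fin m) (Fin m) ℂ}
    (hM : M.IsHermitian) (hN : N.IsHermitian) (X : Matrix (Fin m) (Fin n) ℂ) :
    spectralSum hM hN X (fun a _ => a) = ((M * Xᴴ * X).trace).re := by
  have h := trace_cfc_mul_cfc hM hN X (fun t => t) (fun _ => 1)
  rw [cfc_id_eq, cfc_one_eq_s9, Matrix.mul_one] at h
  simpa using h.symm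

lemma spectralSum_right {M : Matrix (Fin n) (Fin n) ℂ} {N : Matrix (Fin m) (Fin m) ℂ}
    (hM : M.IsHermitian) (hN : N.IsHermitian) (X : Matrix (Fin m) (Fin n) ℂ) :
    spectralSum hM hN X (fun _ b => b) = ((Xᴴ * N * X).trace).re := by
  have h := trace_cfc_mul_cfc hM hN X (fun _ => 1) (fun t => t)
  rw [cfc_id_eq, cfc_one_eq_s9, Matrix.one_mul] at h
  simpa using h.symm

lemma spectralSum_congr {M : Matrix (Fin n) (Fin n) ℂ} {N : Matrix (Fin m) (Fin m) ℂ}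
    (hM : M.PosDef) (hN : N.PosDef) (X : Matrix (Fin m) (Fin n) ℂ) {g h : ℝ → ℝ → ℝ}
    (hgh : ∀ a b, 0 < a → 0 < b → g a b = h a b) :
    spectralSum hM.1 hN.1 X g = spectralSum hM.1 hN.1 X h := by
  refine Finset.sum_congr rfl fun i _ => Finset.sum_congr rfl fun j _ => ?_
  rw [hgh _ _ (hM.eigenvalues_pos i) (hN.eigenvalues_pos j)]

lemma spectralSum_const_mul {M : Matrix (Fin n) (Fin n) ℂ} {N : Matrix (Fin m) (Fin m) ℂ}
    (hM : M.IsHermitian) (hN : N.IsHermitian) (X : Matrix (Fin m) (Fin n) ℂ) (c : ℝ)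
    (g : ℝ → ℝ → ℝ) :
    spectralSum hM hN X (fun a b => c * g a b) = c * spectralSum hM hN X g := by
  simp only [spectralSum, Finset.mul_sum, mul_assoc]

lemma spectralSum_sub {M : Matrix (Fin n) (Fin n) ℂ} {N : Matrix (Fin m) (Fin m) ℂ}
    (hM : M.IsHermitian) (hN : N.IsHermitian) (X : Matrix (Fin m) (Fin n) ℂ)
    (g h : ℝ → ℝ → ℝ) :
    spectralSum hM hN X (fun a b => g a b - h a b) =
      spectralSum hM hN X g - spectralSum hM hN X h := by
  simp only [spectralSum, sub_mul, Finset.sum_sub_distrib]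

end SpectralSum

/-! ### The parallel-sum kernel -/

section Parallel

variable {n m : ℕ}

/-- Completing the square for `a * |x|² + t * b * |k - x|²` as a function of `x`. -/
lemma parallel_scalar {a b t : ℝ} (ha : 0 < a) (hb : 0 < b) (ht : 0 < t) (k x : ℂ) :
    a * Complex.normSq x + t * (b * Complex.normSq (k - x)) =
      t * (a * b / (a + t * b) * Complex.normSq k) +
        Complex.normSq ((a + t * b : ℝ) * x - (t * b : ℝ) * k) / (a + t * b) := by
  have h : a + t * b ≠ 0 := by positivity
  field_simp
  simp only [Complex.normSq_apply, Complex.sub_re, Complex.sub_im, Complex.mul_re, Complex.mul_im,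
    Complex.ofReal_re, Complex.ofReal_im]
  ring

/-- The functional minimized over `X` in the variational formula for the parallel sum. -/
noncomputable def splitEnergy (M : Matrix (Fin n) (Fin n) ℂ) (N : Matrix (Fin m) (Fin m) ℂ)
    (K X : Matrix (Fin m) (Fin n) ℂ) (t : ℝ) : ℝ :=
  ((M * Xᴴ * X).trace).re + t * (((K - X)ᴴ * N * (K - X)).trace).re

/-- `splitEnergy` is its minimal value plus a sum of squares. The eigenvector matrices enter as
variables `U`, `V`, so that rewriting does not interfere with the eigenvalues. -/
lemma splitEnergy_eq_sum {M : Matrix (Fin n) (Fin n) ℂ} {N : Matrix (Fin m) (Fin m) ℂ}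
    (hM : M.PosDef) (hN : N.PosDef) (K X : Matrix (Fin m) (Fin n) ℂ) {t : ℝ} (ht : 0 < t)
    (U : Matrix (Fin n) (Fin n) ℂ) (V : Matrix (Fin m) (Fin m) ℂ)
    (hU : U = hM.1.eigenvectorUnitary) (hV : V = hN.1.eigenvectorUnitary) :
    splitEnergy M N K X t =
      t * spectralSum hM.1 hN.1 K (fun a b => a * b / (a + t * b)) +
      ∑ i, ∑ j, Complex.normSq
        ((hM.1.eigenvalues i + t * hN.1.eigenvalues j : ℝ) * (Vᴴ * X * U) j i -
          (t * hN.1.eigenvalues j : ℝ) * (Vᴴ * K * U) j i) /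
        (hM.1.eigenvalues i + t * hN.1.eigenvalues j) := by
  rw [splitEnergy, ← spectralSum_left hM.1 hN.1, ← spectralSum_right hM.1 hN.1]
  simp only [spectralSum, Finset.mul_sum, ← Finset.sum_add_distrib, ← hU, ← hV]
  refine Finset.sum_congr rfl fun i _ => Finset.sum_congr rfl fun j _ => ?_
  rw [← parallel_scalar (hM.eigenvalues_pos i) (hN.eigenvalues_pos j) ht, Matrix.mul_sub,
    Matrix.sub_mul, Matrix.sub_apply]

lemma parallel_le {M : Matrix (Fin n) (Fin n) ℂ} {N : Matrix (Fin m) (Fin m) ℂ}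
    (hM : M.PosDef) (hN : N.PosDef) (K X : Matrix (Fin m) (Fin n) ℂ) {t : ℝ} (ht : 0 < t) :
    t * spectralSum hM.1 hN.1 K (fun a b => a * b / (a + t * b)) ≤ splitEnergy M N K X t := by
  rw [splitEnergy_eq_sum hM hN K X ht _ _ rfl rfl, le_add_iff_nonneg_right]
  refine Finset.sum_nonneg fun i _ => Finset.sum_nonneg fun j _ => ?_
  have := hM.eigenvalues_pos i
  have := hN.eigenvalues_pos j
  exact div_nonneg (Complex.normSq_nonneg _) (by positivity)

lemma exists_parallel_eq {M : Matrix (Fin n) (Fin n) ℂ} {N : Matrix (Fin m) (Fin m) ℂ}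
    (hM : M.PosDef) (hN : N.PosDef) (K : Matrix (Fin m) (Fin n) ℂ) {t : ℝ} (ht : 0 < t) :
    ∃ X, splitEnergy M N K X t =
      t * spectralSum hM.1 hN.1 K (fun a b => a * b / (a + t * b)) := by
  obtain ⟨U, hU⟩ : ∃ U : Matrix (Fin n) (Fin n) ℂ, U = hM.1.eigenvectorUnitary := ⟨_, rfl⟩
  obtain ⟨V, hV⟩ : ∃ V : Matrix (Fin m) (Fin m) ℂ, V = hN.1.eigenvectorUnitary := ⟨_, rfl⟩
  have hU1 : Uᴴ * U = 1 := by simp [hU, ← Matrix.star_eq_conjTranspose]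
  have hV1 : Vᴴ * V = 1 := by simp [hV, ← Matrix.star_eq_conjTranspose]
  -- In the eigenbases the minimizer is `K` with its entries multiplied by `t b / (a + t b)`.
  let Z : Matrix (Fin m) (Fin n) ℂ := fun j i =>
    ((t * hN.1.eigenvalues j / (hM.1.eigenvalues i + t * hN.1.eigenvalues j) : ℝ) : ℂ) *
      (Vᴴ * K * U) j i
  have hZ : Vᴴ * (V * Z * Uᴴ) * U = Z := by
    rw [← Matrix.mul_assoc, ← Matrix.mul_assoc, hV1, Matrix.one_mul, Matrix.mul_assoc, hU1,
      Matrix.mul_one]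
  refine ⟨V * Z * Uᴴ, ?_⟩
  rw [splitEnergy_eq_sum hM hN K _ ht U V hU hV, add_eq_left]
  refine Finset.sum_eq_zero fun i _ => Finset.sum_eq_zero fun j _ => ?_
  have h1 := hM.eigenvalues_pos i
  have h2 := hN.eigenvalues_pos j
  have h3 : hM.1.eigenvalues i + t * hN.1.eigenvalues j ≠ 0 := by positivity
  rw [hZ]
  simp only [Z]
  rw [← mul_assoc, ← Complex.ofReal_mul, mul_div_cancel₀ _ h3, sub_self, map_zero, zero_div]

lemma splitEnergy_combo (M₁ M₂ : Matrix (Fin n) (Fin n) ℂ) (N₁ N₂ : Matrix (Fin m) (Fin m) ℂ)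
    (K X : Matrix (Fin m) (Fin n) ℂ) (t l : ℝ) :
    splitEnergy ((l : ℂ) • M₁ + ((1 - l : ℝ) : ℂ) • M₂) ((l : ℂ) • N₁ + ((1 - l : ℝ) : ℂ) • N₂)
      K X t = l * splitEnergy M₁ N₁ K X t + (1 - l) * splitEnergy M₂ N₂ K X t := by
  simp only [splitEnergy, Matrix.add_mul, Matrix.mul_add, Matrix.smul_mul, Matrix.mul_smul,
    Matrix.trace_add, Matrix.trace_smul, smul_eq_mul, Complex.add_re, Complex.re_ofReal_mul]
  ring

/-- A minimum over `X` of functions linear in `(M, N)` is concave: evaluate both endpoints at the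
minimizer for the convex combination. -/
lemma parallel_concave {M₁ M₂ : Matrix (Fin n) (Fin n) ℂ} {N₁ N₂ : Matrix (Fin m) (Fin m) ℂ}
    (hM₁ : M₁.PosDef) (hM₂ : M₂.PosDef) (hN₁ : N₁.PosDef) (hN₂ : N₂.PosDef)
    {l : ℝ} (hl0 : 0 ≤ l) (hl1 : l ≤ 1)
    (hM : ((l : ℂ) • M₁ + ((1 - l : ℝ) : ℂ) • M₂).PosDef)
    (hN : ((l : ℂ) • N₁ + ((1 - l : ℝ) : ℂ) • N₂).PosDef)
    (K : Matrix (Fin m) (Fin n) ℂ) {t : ℝ} (ht : 0 < t) :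
    l * spectralSum hM₁.1 hN₁.1 K (fun a b => a * b / (a + t * b)) +
      (1 - l) * spectralSum hM₂.1 hN₂.1 K (fun a b => a * b / (a + t * b)) ≤
    spectralSum hM.1 hN.1 K (fun a b => a * b / (a + t * b)) := by
  obtain ⟨X, hX⟩ := exists_parallel_eq hM hN K ht
  rw [splitEnergy_combo] at hX
  have h1 := mul_le_mul_of_nonneg_left (parallel_le hM₁ hN₁ K X ht) hl0
  have h2 := mul_le_mul_of_nonneg_left (parallel_le hM₂ hN₂ K X ht) (sub_nonneg.2 hl1)
  refine le_of_mul_le_mul_left ?_ ht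
  linarith

lemma posDef_combo {M₁ M₂ : Matrix (Fin n) (Fin n) ℂ} (hM₁ : M₁.PosDef) (hM₂ : M₂.PosDef)
    {l : ℝ} (hl0 : 0 ≤ l) (hl1 : l ≤ 1) :
    ((l : ℂ) • M₁ + ((1 - l : ℝ) : ℂ) • M₂).PosDef := by
  rcases hl0.eq_or_lt with rfl | h
  · simpa using hM₂
  · exact (hM₁.smul (by exact_mod_cast h)).add_posSemidef
      (hM₂.posSemidef.smul (by exact_mod_cast sub_nonneg.2 hl1))

end Parallel

/-! ### Integrals of kernels -/

section Integral

variable {n m : ℕ}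

lemma integrable_spectralSum {M : Matrix (Fin n) (Fin n) ℂ} {N : Matrix (Fin m) (Fin m) ℂ}
    (hM : M.PosDef) (hN : N.PosDef) (K : Matrix (Fin m) (Fin n) ℂ) {G : ℝ → ℝ → ℝ → ℝ}
    (hG : ∀ a b, 0 < a → 0 < b → IntegrableOn (fun t => G t a b) (Set.Ioi 0)) :
    IntegrableOn (fun t => spectralSum hM.1 hN.1 K (G t)) (Set.Ioi 0) := by
  unfold spectralSum
  exact integrable_finsetSum _ fun i _ => integrable_finsetSum _ fun j _ =>
    (hG _ _ (hM.eigenvalues_pos i) (hN.eigenvalues_pos j)).mul_const _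

lemma integral_spectralSum {M : Matrix (Fin n) (Fin n) ℂ} {N : Matrix (Fin m) (Fin m) ℂ}
    (hM : M.PosDef) (hN : N.PosDef) (K : Matrix (Fin m) (Fin n) ℂ) {G : ℝ → ℝ → ℝ → ℝ}
    (hG : ∀ a b, 0 < a → 0 < b → IntegrableOn (fun t => G t a b) (Set.Ioi 0)) :
    ∫ t in Set.Ioi 0, spectralSum hM.1 hN.1 K (G t) =
      spectralSum hM.1 hN.1 K (fun a b => ∫ t in Set.Ioi 0, G t a b) := by
  have h := fun i j => (hG _ _ (hM.eigenvalues_pos i) (hN.eigenvalues_pos j)).mul_const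
    (Complex.normSq (((hN.1.eigenvectorUnitary : Matrix (Fin m) (Fin m) ℂ)ᴴ * K *
      (hM.1.eigenvectorUnitary : Matrix (Fin n) (Fin n) ℂ)) j i))
  unfold spectralSum
  rw [integral_finsetSum _ fun i _ => integrable_finsetSum _ fun j _ => h i j]
  refine Finset.sum_congr rfl fun i _ => ?_
  rw [integral_finsetSum _ fun j _ => h i j]
  refine Finset.sum_congr rfl fun j _ => ?_
  rw [integral_mul_const]

/-- Concavity passes from the kernels `G t` to a positive multiple `g` of their integral over
`t`. -/
lemma spectralSum_concave_of_integral {M₁ M₂ M : Matrix (Fin n) (Fin n) ℂ}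
    {N₁ N₂ N : Matrix (Fin m) (Fin m) ℂ} (hM₁ : M₁.PosDef) (hM₂ : M₂.PosDef) (hM : M.PosDef)
    (hN₁ : N₁.PosDef) (hN₂ : N₂.PosDef) (hN : N.PosDef) (K : Matrix (Fin m) (Fin n) ℂ) (l : ℝ)
    {G : ℝ → ℝ → ℝ → ℝ} {g : ℝ → ℝ → ℝ} {c : ℝ} (hc : 0 < c)
    (hG : ∀ a b, 0 < a → 0 < b → IntegrableOn (fun t => G t a b) (Set.Ioi 0))
    (hg : ∀ a b, 0 < a → 0 < b → ∫ t in Set.Ioi 0, G t a b = c * g a b)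
    (h : ∀ t, 0 < t → l * spectralSum hM₁.1 hN₁.1 K (G t) +
      (1 - l) * spectralSum hM₂.1 hN₂.1 K (G t) ≤ spectralSum hM.1 hN.1 K (G t)) :
    l * spectralSum hM₁.1 hN₁.1 K g + (1 - l) * spectralSum hM₂.1 hN₂.1 K g ≤
      spectralSum hM.1 hN.1 K g := by
  have key : ∀ {M : Matrix (Fin n) (Fin n) ℂ} {N : Matrix (Fin m) (Fin m) ℂ}
      (hM : M.PosDef) (hN : N.PosDef),
      ∫ t in Set.Ioi 0, spectralSum hM.1 hN.1 K (G t) = c * spectralSum hM.1 hN.1 K g := by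
    intro M N hM hN
    rw [integral_spectralSum hM hN K hG, spectralSum_congr hM hN K hg, spectralSum_const_mul]
  have i1 := (integrable_spectralSum hM₁ hN₁ K hG).const_mul l
  have i2 := (integrable_spectralSum hM₂ hN₂ K hG).const_mul (1 - l)
  have := setIntegral_mono_on (i1.add i2) (integrable_spectralSum hM hN K hG) measurableSet_Ioi
    (fun t ht => h t ht)
  simp only [Pi.add_apply] at this
  rw [integral_add i1 i2, integral_const_mul, integral_const_mul, key hM₁ hN₁, key hM₂ hN₂,
    key hM hN] at this
  refine le_of_mul_le_mul_left ?_ hc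
  linarith

end Integral

/-- **Lieb's concavity theorem and Ando's convexity theorem for trace functionals**:
for a fixed `m × n` matrix `K`, the functional
`f(M,N) = Re tr (M^α K† N^(1-α) K)` on pairs of positive definite matrices is jointly
concave for `α ∈ (0,1)` and jointly convex for `α ∈ (1,2)`. -/
theorem lieb_concavity_ando_convexity_trace {n m : ℕ}
    (K : Matrix (Fin m) (Fin n) ℂ) (α : ℝ)
    (M₁ M₂ : Matrix (Fin n) (Fin n) ℂ) (N₁ N₂ : Matrix (Fin m) (Fin m) ℂ)
    (hM₁ : M₁.PosDef) (hM₂ : M₂.PosDef) (hN₁ : N₁.PosDef) (hN₂ : N₂.PosDef)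
    (l : ℝ) (hl0 : 0 ≤ l) (hl1 : l ≤ 1) :
    (0 < α → α < 1 →
      ((mpow ((l : ℂ) • M₁ + ((1 - l : ℝ) : ℂ) • M₂) α * Kᴴ *
          mpow ((l : ℂ) • N₁ + ((1 - l : ℝ) : ℂ) • N₂) (1 - α) * K).trace).re ≥
        l * ((mpow M₁ α * Kᴴ * mpow N₁ (1 - α) * K).trace).re +
        (1 - l) * ((mpow M₂ α * Kᴴ * mpow N₂ (1 - α) * K).trace).re) ∧
    (1 < α → α < 2 →
      ((mpow ((l : ℂ) • M₁ + ((1 - l : ℝ) : ℂ) • M₂) α * Kᴴ *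
          mpow ((l : ℂ) • N₁ + ((1 - l : ℝ) : ℂ) • N₂) (1 - α) * K).trace).re ≤
        l * ((mpow M₁ α * Kᴴ * mpow N₁ (1 - α) * K).trace).re +
        (1 - l) * ((mpow M₂ α * Kᴴ * mpow N₂ (1 - α) * K).trace).re) := by
  have hM := posDef_combo hM₁ hM₂ hl0 hl1
  have hN := posDef_combo hN₁ hN₂ hl0 hl1
  have key : ∀ {M : Matrix (Fin n) (Fin n) ℂ} {N : Matrix (Fin m) (Fin m) ℂ}
      (hM : M.PosDef) (hN : N.PosDef), ((mpow M α * Kᴴ * mpow N (1 - α) * K).trace).re =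
      spectralSum hM.1 hN.1 K (fun a b => a ^ α * b ^ (1 - α)) := by
    intro M N hM hN
    rw [← trace_cfc_mul_cfc, mpow, mpow, dif_pos hM.1, dif_pos hN.1]
  rw [key hM hN, key hM₁ hN₁, key hM₂ hN₂]
  constructor
  · intro h0 h1
    have hp : α ∈ Set.Ioo (0 : ℝ) 1 := ⟨h0, h1⟩
    refine spectralSum_concave_of_integral hM₁ hM₂ hM hN₁ hN₂ hN K l
      (G := fun t a b => b * Real.rpowIntegrand₀₁ α t (a / b))
      (Real.integral_rpowIntegrand₀₁_one_pos hp) ?_ ?_ ?_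
    · intro a b ha hb
      exact (Real.integrableOn_rpowIntegrand₀₁_Ioi hp (by positivity)).const_mul b
    · intro a b ha hb
      rw [integral_const_mul, Real.integral_rpowIntegrand₀₁_eq_rpow_mul_const hp (by positivity),
        Real.div_rpow ha.le hb.le, Real.rpow_sub hb, Real.rpow_one]
      ring
    · intro t ht
      have hk : ∀ a b, 0 < a → 0 < b → b * Real.rpowIntegrand₀₁ α t (a / b) =
          t ^ (α - 1) * (a * b / (a + t * b)) := by
        intro a b ha hb
        rw [Real.rpowIntegrand₀₁_eq_pow_div hp ht.le (by positivity)]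
        field_simp
        ring
      rw [spectralSum_congr hM hN K hk, spectralSum_congr hM₁ hN₁ K hk,
        spectralSum_congr hM₂ hN₂ K hk]
      simp only [spectralSum_const_mul]
      have := mul_le_mul_of_nonneg_left (parallel_concave hM₁ hM₂ hN₁ hN₂ hl0 hl1 hM hN K ht)
        (Real.rpow_nonneg ht.le (α - 1))
      linarith
  · intro h1 h2
    have hp : α - 1 ∈ Set.Ioo (0 : ℝ) 1 := ⟨by linarith, by linarith⟩
    -- Concavity of the negated kernel.
    have hneg : l * spectralSum hM₁.1 hN₁.1 K (fun a b => (-1) * (a ^ α * b ^ (1 - α))) +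
        (1 - l) * spectralSum hM₂.1 hN₂.1 K (fun a b => (-1) * (a ^ α * b ^ (1 - α))) ≤
        spectralSum hM.1 hN.1 K (fun a b => (-1) * (a ^ α * b ^ (1 - α))) := by
      refine spectralSum_concave_of_integral hM₁ hM₂ hM hN₁ hN₂ hN K l
        (G := fun t a b => (-a) * Real.rpowIntegrand₀₁ (α - 1) t (a / b))
        (Real.integral_rpowIntegrand₀₁_one_pos hp) ?_ ?_ ?_
      · intro a b ha hb
        exact (Real.integrableOn_rpowIntegrand₀₁_Ioi hp (by positivity)).const_mul (-a)
      · intro a b ha hb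
        rw [integral_const_mul,
          Real.integral_rpowIntegrand₀₁_eq_rpow_mul_const hp (by positivity),
          Real.div_rpow ha.le hb.le, Real.rpow_sub hb, Real.rpow_sub hb, Real.rpow_sub ha,
          Real.rpow_one, Real.rpow_one]
        field_simp
      · intro t ht
        have hk : ∀ a b, 0 < a → 0 < b → (-a) * Real.rpowIntegrand₀₁ (α - 1) t (a / b) =
            t ^ (α - 1 - 1) * (t * (a * b / (a + t * b)) - a) := by
          intro a b ha hb
          rw [Real.rpowIntegrand₀₁_eq_pow_div hp ht.le (by positivity)]
          field_simp
          ring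
        rw [spectralSum_congr hM hN K hk, spectralSum_congr hM₁ hN₁ K hk,
          spectralSum_congr hM₂ hN₂ K hk]
        simp only [spectralSum_const_mul, spectralSum_sub]
        have hlin : spectralSum hM.1 hN.1 K (fun a _ => a) =
            l * spectralSum hM₁.1 hN₁.1 K (fun a _ => a) +
              (1 - l) * spectralSum hM₂.1 hN₂.1 K (fun a _ => a) := by
          simp only [spectralSum_left, Matrix.add_mul, Matrix.smul_mul, Matrix.trace_add,
            Matrix.trace_smul, smul_eq_mul, Complex.add_re, Complex.re_ofReal_mul]
        have h3 := mul_le_mul_of_nonneg_left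
          (parallel_concave hM₁ hM₂ hN₁ hN₂ hl0 hl1 hM hN K ht) ht.le
        have h4 := mul_le_mul_of_nonneg_left (sub_le_sub_right h3
          (spectralSum hM.1 hN.1 K (fun a _ => a))) (Real.rpow_nonneg ht.le (α - 1 - 1))
        refine le_trans (le_of_eq ?_) h4
        rw [hlin]
        ring
    simp only [spectralSum_const_mul] at hneg
    linarith
end
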